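/- arXiv:2503.23164 — 2 statements merged into one kernel-verified Lean document; each statement's English description precedes it below -/
import Mathlib

section
/- Fix δ > 0 and ε > 0. Then there exist C > 0, η > 0 and n₀ such that for all n ≥ n₀, all p ∈ [δ, 1−δ], all k with k/n ∈ [δ, 1−δ], and any fixed k-element set S ⊆ [n], with probability at least 1 − exp(−n^η) over G = G_{n,p} the following three bounds all hold, where x is uniform on S and x̄ is uniform on S̄: |Var_x d_S(x) − p(1−p)k| ≤ C·n^{1/2+ε}; |Var_{x̄} d_S(x̄) − p(1−p)k| ≤ C·n^{1/2+ε}; and |Cov_{x̄}(d_S(x̄), d_{S̄}(x̄))| = |E_{x̄}[d_S(x̄)·d_{S̄}(x̄)] − E_{x̄}[d_S(x̄)]·E_{x̄}[d_{S̄}(x̄)]| ≤ C·n^{1/2+ε}. -/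
/-!
Each variance or covariance in the theorem is an empirical covariance over `x ∈ A` of `d_B(x)` and
`d_B'(x)`, with `A, B, B' ∈ {S, Sᶜ}`. On `A` the expected degrees do not depend on `x`, so the degrees
may be replaced by centred degrees `D_B(x)`, which are linear forms in the centred edge indicators
`X_e = 1[e ∈ G] - p`. The covariance is then
`(∑ x ∈ A, D_B(x) D_B'(x)) / |A| - (∑ x ∈ A, D_B(x)) (∑ x ∈ A, D_B'(x)) / |A| ^ 2`.

The last two sums are linear forms with coefficients at most `2`, hence with high probability at most
`n ^ (1 + ε/2)` by a Hoeffding bound (`linear_tail`). In the first sum, the diagonal terms satisfy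
`X_e ^ 2 = p (1 - p) + (1 - 2 p) X_e` (`Xc_sq`), which gives the expected value plus another linear
form. For the off-diagonal terms, enumerate the edges; the sum becomes `∑ e, X_e Z_e`, where `Z_e` is
a linear form in the edges preceding `e`, with `O(n)` bounded coefficients. Except with stretched
exponentially small probability every `|Z_e|` is at most `T = n ^ (1/2 + ε/2)`. After truncating the
`Z_e` at `T`, the sum is a martingale with at most `n ^ 2` increments bounded by `T`, so by Azuma's
inequality it is at most `n ^ (3/2 + ε)` (`azuma_mgf`, `quad_tail`). Dividing by `|A| ≥ δ n` gives the
theorem, with `η = ε / 2` (`cov_tail`, `error_le`, `eventually_tail_le`).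
-/

open Finset MeasureTheory ProbabilityTheory

noncomputable section

/-- Uniform probability of an event `P` over a finite sample space `Ω`. -/
def Pru {α : Type*} (Ω : Finset α) (P : α → Prop) : ℝ := by
  classical exact ((Ω.filter P).card : ℝ) / Ω.card

/-- Expectation of `f` under the uniform distribution on `Ω`. -/
def Exu {α : Type*} (Ω : Finset α) (f : α → ℝ) : ℝ := (∑ a ∈ Ω, f a) / Ω.card

/-- Variance of `f` under the uniform distribution on `Ω`. -/
def Varu {α : Type*} (Ω : Finset α) (f : α → ℝ) : ℝ := Exu Ω (fun a => (f a - Exu Ω f) ^ 2)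

/-- Conditional expectation of `f` given the value of `g`, under uniform distribution on `Ω`. -/
def condExpU {α β : Type*} (Ω : Finset α) (f : α → ℝ) (g : α → β) (ω : α) : ℝ := by
  classical exact Exu (Ω.filter (fun ω' => g ω' = g ω)) f

/-- The edge set of the complete graph on `[n]`. -/
def completeEdges (n : ℕ) : Finset (Sym2 (Fin n)) := by
  classical exact Finset.univ.filter (fun e => ¬ e.IsDiag)

/-- A finset of `Sym2`s is a graph if it has no loops. -/
def IsGraph {n : ℕ} (G : Finset (Sym2 (Fin n))) : Prop := ∀ e ∈ G, ¬ e.IsDiag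

/-- The sample space of `G_{n,M}`: all graphs on `[n]` with exactly `M` edges. -/
def graphsM (n M : ℕ) : Finset (Finset (Sym2 (Fin n))) := by
  classical exact (completeEdges n).powerset.filter (fun G => G.card = M)

/-- `e(S)`: number of edges of `G` with both endpoints in `S`. -/
def edgesIn {n : ℕ} (G : Finset (Sym2 (Fin n))) (S : Finset (Fin n)) : ℕ := by
  classical exact (G.filter (fun e => ∀ v ∈ e, v ∈ S)).card

/-- `d_S(v)`: number of neighbours of `v` (in graph `G`) lying in `S`. -/
def dS {n : ℕ} (G : Finset (Sym2 (Fin n))) (S : Finset (Fin n)) (v : Fin n) : ℕ := by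
  classical exact (S.filter (fun w => s(v, w) ∈ G)).card

/-- All `k`-element subsets of `[n]`. -/
def kSets (n k : ℕ) : Finset (Finset (Fin n)) := Finset.univ.powersetCard k

/-- Probability of an event under the uniform random graph `G_{n,M}`. -/
def PrGnM (n M : ℕ) (P : Finset (Sym2 (Fin n)) → Prop) : ℝ := Pru (graphsM n M) P

/-- Probability of an event under the binomial random graph `G_{n,p}`. -/
def PrGnp (n : ℕ) (p : ℝ) (P : Finset (Sym2 (Fin n)) → Prop) : ℝ := by
  classical exact ∑ G ∈ (completeEdges n).powerset,
    if (P G) then p ^ G.card * (1 - p) ^ ((completeEdges n).card - G.card) else 0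

/-- `N = n(n-1)/2` as a real number. -/
def Nr (n : ℕ) : ℝ := (n : ℝ) * ((n : ℝ) - 1) / 2

/-- `K = k(k-1)/2` as a real number. -/
def Kr (k : ℕ) : ℝ := (k : ℝ) * ((k : ℝ) - 1) / 2

/-- `λ = ((n²-k²)k²/(2n⁴))·(M(N-M)/N²)`. -/
def lamP (n M k : ℕ) : ℝ :=
  (((n:ℝ)^2 - (k:ℝ)^2) * (k:ℝ)^2 / (2 * (n:ℝ)^4)) * ((M:ℝ) * (Nr n - (M:ℝ)) / (Nr n)^2)

/-- The mean `K·M/N`. -/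
def muP (n M k : ℕ) : ℝ := Kr k * (M:ℝ) / Nr n

/-- `W = (e(S) - K·M/N)/n`. -/
def Wfun (n M k : ℕ) (G : Finset (Sym2 (Fin n))) (S : Finset (Fin n)) : ℝ :=
  ((edgesIn G S : ℝ) - muP n M k) / n

/-- `V = Σ_v d(v)² - n·d(G)²`, i.e. `n` times the degree variance. -/
def Vdeg {n : ℕ} (G : Finset (Sym2 (Fin n))) : ℝ :=
  (∑ v : Fin n, (dS G Finset.univ v : ℝ) ^ 2) - (n:ℝ) * (2 * (G.card : ℝ) / n) ^ 2

/-- Gaussian CDF with mean `m` and variance `v`. -/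
def gaussCdf (m v z : ℝ) : ℝ := ((gaussianReal m v.toNNReal) (Set.Iic z)).toReal

/-- Gaussian measure of a set, mean `m`, variance `v`. -/
def gaussMeas (m v : ℝ) (A : Set ℝ) : ℝ := ((gaussianReal m v.toNNReal) A).toReal

/-- Gaussian density with mean `m` and variance `v`. -/
def gaussPdf (m v x : ℝ) : ℝ := gaussianPDFReal m v.toNNReal x

/-- `P(Y ∈ ·)` for `Y ~ Bin(ν, p)`. -/
def binomPr (ν : ℕ) (p : ℝ) (P : ℕ → Prop) : ℝ := by
  classical exact ∑ j ∈ Finset.range (ν + 1),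
    if (P j) then (ν.choose j : ℝ) * p ^ j * (1 - p) ^ (ν - j) else 0

/-- Sample space for "uniform `k`-set `S`, then uniform `x ∈ S` and `x̄ ∈ S̄`". -/
def SwapΩ (n k : ℕ) : Finset (Σ _ : Finset (Fin n), Fin n × Fin n) :=
  (kSets n k).sigma (fun S => S ×ˢ Sᶜ)

/-- A triple `(a, r, t)` is valid for `β`. -/
def ValidTriple (β : ℝ) (n a r t : ℕ) : Prop :=
  a ≤ r ∧
  (∃ c : ℝ, 1/2 ≤ c ∧ c ≤ 1 ∧ (a : ℝ) = c * (t:ℝ) ^ ((3:ℝ)/2) * (n:ℝ) ^ (2*β - 1/2)) ∧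
  (r : ℝ) ≤ (n:ℝ) ^ (-β) * Real.sqrt ((n:ℝ) * (t:ℝ))

/-! ### Random subsets and tail bounds for linear and quadratic forms -/

section RandomSubset

variable {α : Type*}

/-- Expectation of `f G`, where `G ⊆ E` is random and contains each element of `E` independently
with probability `p`. -/
def Ew (E : Finset α) (p : ℝ) (f : Finset α → ℝ) : ℝ :=
  ∑ G ∈ E.powerset, p ^ G.card * (1 - p) ^ (E.card - G.card) * f G

open Classical in
/-- Probability of `P G` for the `p`-random subset `G` of `E`. -/
def Pw (E : Finset α) (p : ℝ) (P : Finset α → Prop) : ℝ :=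
  Ew E p (fun G => if P G then 1 else 0)

lemma Ew_mono {E : Finset α} {p : ℝ} (h0 : 0 ≤ p) (h1 : p ≤ 1) {f g : Finset α → ℝ}
    (h : ∀ G ⊆ E, f G ≤ g G) : Ew E p f ≤ Ew E p g := by
  unfold Ew
  refine Finset.sum_le_sum fun G hG => ?_
  have : 0 ≤ 1 - p := by linarith
  exact mul_le_mul_of_nonneg_left (h G (Finset.mem_powerset.1 hG)) (by positivity)

lemma Ew_const_mul (E : Finset α) (p c : ℝ) (f : Finset α → ℝ) :
    Ew E p (fun G => c * f G) = c * Ew E p f := by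
  unfold Ew
  rw [Finset.mul_sum]
  exact Finset.sum_congr rfl fun G _ => by ring

lemma Ew_add (E : Finset α) (p : ℝ) (f g : Finset α → ℝ) :
    Ew E p (fun G => f G + g G) = Ew E p f + Ew E p g := by
  unfold Ew
  rw [← Finset.sum_add_distrib]
  exact Finset.sum_congr rfl fun G _ => by ring

lemma Ew_sum {ι : Type*} (s : Finset ι) (E : Finset α) (p : ℝ) (f : ι → Finset α → ℝ) :
    Ew E p (fun G => ∑ i ∈ s, f i G) = ∑ i ∈ s, Ew E p (f i) := by
  unfold Ew
  simp_rw [Finset.mul_sum]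
  exact Finset.sum_comm

lemma Ew_one (E : Finset α) (p : ℝ) : Ew E p (fun _ => 1) = 1 := by
  unfold Ew
  simp only [mul_one]
  rw [Finset.sum_pow_mul_eq_add_pow]
  simp

lemma Pw_mono {E : Finset α} {p : ℝ} (h0 : 0 ≤ p) (h1 : p ≤ 1) {P Q : Finset α → Prop}
    (h : ∀ G ⊆ E, P G → Q G) : Pw E p P ≤ Pw E p Q := by
  unfold Pw
  refine Ew_mono h0 h1 fun G hG => ?_
  by_cases hP : P G
  · simp [hP, h G hG hP]
  · simp only [hP, if_false]; split_ifs <;> norm_num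

lemma Pw_or {E : Finset α} {p : ℝ} (h0 : 0 ≤ p) (h1 : p ≤ 1) (P Q : Finset α → Prop) :
    Pw E p (fun G => P G ∨ Q G) ≤ Pw E p P + Pw E p Q := by
  unfold Pw
  rw [← Ew_add]
  refine Ew_mono h0 h1 fun G _ => ?_
  by_cases hP : P G <;> by_cases hQ : Q G <;> simp [hP, hQ]

lemma Pw_exists {ι : Type*} (s : Finset ι) {E : Finset α} {p : ℝ} (h0 : 0 ≤ p) (h1 : p ≤ 1)
    (P : ι → Finset α → Prop) :
    Pw E p (fun G => ∃ i ∈ s, P i G) ≤ ∑ i ∈ s, Pw E p (P i) := by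
  classical
  unfold Pw
  rw [← Ew_sum]
  refine Ew_mono h0 h1 fun G _ => ?_
  split_ifs with h
  · obtain ⟨i, hi, hP⟩ := h
    have := Finset.single_le_sum (f := fun i => if P i G then (1:ℝ) else 0)
      (fun j _ => by split_ifs <;> norm_num) hi
    simp only [hP, if_true] at this
    convert this
  · exact Finset.sum_nonneg fun j _ => by split_ifs <;> norm_num

lemma Pw_not (E : Finset α) (p : ℝ) (P : Finset α → Prop) :
    Pw E p P = 1 - Pw E p (fun G => ¬ P G) := by
  have : Pw E p P + Pw E p (fun G => ¬ P G) = 1 := by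
    unfold Pw
    rw [← Ew_add]
    refine Eq.trans ?_ (Ew_one E p)
    congr 1; funext G
    by_cases hP : P G <;> simp [hP]
  linarith

lemma exp_le_add_exp_sq (x : ℝ) : Real.exp x ≤ x + Real.exp (x ^ 2) := by
  have h2 := Real.add_one_le_exp (x ^ 2)
  rcases le_or_gt |x| 1 with h | h
  · have := Real.abs_exp_sub_one_sub_id_le h
    have := (abs_le.1 this).2
    linarith
  · rcases lt_abs.1 h with h | h
    · have : Real.exp x ≤ Real.exp (x ^ 2) := Real.exp_le_exp.2 (by nlinarith)
      linarith
    · have : Real.exp x ≤ 1 := Real.exp_le_one_iff.2 (by linarith)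
      nlinarith

/-- A centred Bernoulli variable is sub-Gaussian; the constant is not the optimal one of Hoeffding's
lemma, but it follows from `exp x ≤ x + exp (x ^ 2)` alone. -/
lemma bernoulli_mgf {p : ℝ} (h0 : 0 ≤ p) (h1 : p ≤ 1) (t : ℝ) :
    (1 - p) * Real.exp (t * (0 - p)) + p * Real.exp (t * (1 - p)) ≤ Real.exp (t ^ 2) := by
  have a1 := exp_le_add_exp_sq (t * (0 - p))
  have a2 := exp_le_add_exp_sq (t * (1 - p))
  have b1 : Real.exp ((t * (0 - p)) ^ 2) ≤ Real.exp (t ^ 2) :=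
    Real.exp_le_exp.2 (by
      have : p ^ 2 ≤ 1 := by nlinarith
      nlinarith [mul_le_mul_of_nonneg_left this (sq_nonneg t)])
  have b2 : Real.exp ((t * (1 - p)) ^ 2) ≤ Real.exp (t ^ 2) :=
    Real.exp_le_exp.2 (by
      have : (1 - p) ^ 2 ≤ 1 := by nlinarith
      nlinarith [mul_le_mul_of_nonneg_left this (sq_nonneg t)])
  have c1 := mul_le_mul_of_nonneg_left (a1.trans (add_le_add_right b1 _)) (sub_nonneg.2 h1)
  have c2 := mul_le_mul_of_nonneg_left (a2.trans (add_le_add_right b2 _)) h0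
  linarith

/-- Two-sided Chernoff bound, from a sub-Gaussian bound on the moment generating function valid for
all real `t`. -/
lemma chernoff {p : ℝ} (h0 : 0 ≤ p) (h1 : p ≤ 1) (E : Finset α) (f : Finset α → ℝ) {V s : ℝ}
    (hV : 0 < V) (hs : 0 ≤ s)
    (hf : ∀ t : ℝ, Ew E p (fun G => Real.exp (t * f G)) ≤ Real.exp (t ^ 2 * V)) :
    Pw E p (fun G => s < |f G|) ≤ 2 * Real.exp (-(s ^ 2 / (4 * V))) := by
  -- the minimiser of `t ^ 2 * V - t * s`
  set t := s / (2 * V) with ht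
  have ht0 : 0 ≤ t := by positivity
  have key : ∀ u : ℝ, u ^ 2 = t ^ 2 → Ew E p (fun G => Real.exp (-(t * s)) * Real.exp (u * f G)) ≤
      Real.exp (-(s ^ 2 / (4 * V))) := by
    intro u hu
    rw [Ew_const_mul]
    refine (mul_le_mul_of_nonneg_left (hf u) (Real.exp_nonneg _)).trans (le_of_eq ?_)
    rw [← Real.exp_add, hu]
    congr 1
    rw [ht]; field_simp; ring
  have k1 := key t rfl
  have k2 := key (-t) (by ring)
  rw [two_mul]
  refine le_trans ?_ (add_le_add k1 k2)
  unfold Pw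
  rw [← Ew_add]
  refine Ew_mono h0 h1 fun G _ => ?_
  rw [← Real.exp_add, ← Real.exp_add]
  split_ifs with h
  · rcases lt_abs.1 h with h | h
    · have : 0 ≤ -(t * s) + t * f G := by nlinarith
      have := Real.one_le_exp this
      linarith [Real.exp_nonneg (-(t * s) + -t * f G)]
    · have : 0 ≤ -(t * s) + -t * f G := by nlinarith
      have := Real.one_le_exp this
      linarith [Real.exp_nonneg (-(t * s) + t * f G)]
  · positivity

variable [DecidableEq α]

/-- The centred indicator `1[e ∈ G] - p`. -/
def Xc (p : ℝ) (G : Finset α) (e : α) : ℝ := (if e ∈ G then 1 else 0) - p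

/-- Conditioning on whether the new element `m` belongs to the random set. -/
lemma Ew_insert {E : Finset α} {m : α} (hm : m ∉ E) (p : ℝ) (f : Finset α → ℝ) :
    Ew (insert m E) p f = Ew E p (fun G => (1 - p) * f G + p * f (insert m G)) := by
  unfold Ew
  rw [Finset.sum_powerset_insert hm, ← Finset.sum_add_distrib]
  refine Finset.sum_congr rfl fun G hG => ?_
  have hGE := Finset.mem_powerset.1 hG
  have hmG : m ∉ G := fun h => hm (hGE h)
  have hc := Finset.card_le_card hGE
  rw [Finset.card_insert_of_notMem hm, Finset.card_insert_of_notMem hmG]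
  have h1 : E.card + 1 - G.card = (E.card - G.card) + 1 := by omega
  have h2 : E.card + 1 - (G.card + 1) = E.card - G.card := by omega
  rw [h1, h2]; ring

/-- Azuma's inequality at the level of moment generating functions. The elements of `E` are revealed
in increasing order of `r`, and the coefficient `a e` of the increment `Xc p G e` depends only on the
part of `G` revealed before `e`. -/
lemma azuma_mgf {p : ℝ} (h0 : 0 ≤ p) (h1 : p ≤ 1) (r : α → ℕ) (a : α → Finset α → ℝ)
    (T : α → ℝ) (ha : ∀ e H, |a e H| ≤ T e) (t : ℝ) (E : Finset α) :
    Ew E p (fun G => Real.exp (t * ∑ e ∈ E, Xc p G e * a e (G.filter (fun f => r f < r e))))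
      ≤ Real.exp (t ^ 2 * ∑ e ∈ E, T e ^ 2) := by
  induction E using Finset.induction_on_max_value r with
  | empty => simp [Ew]
  | insert m E hm hmax ih =>
    rw [Ew_insert hm]
    have hexp : t ^ 2 * ∑ e ∈ insert m E, T e ^ 2 =
        (t * T m) ^ 2 + t ^ 2 * ∑ e ∈ E, T e ^ 2 := by
      rw [Finset.sum_insert hm]; ring
    rw [hexp, Real.exp_add]
    refine le_trans ?_ (mul_le_mul_of_nonneg_left ih (Real.exp_nonneg _))
    rw [← Ew_const_mul]
    refine Ew_mono h0 h1 fun G hG => ?_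
    have hmG : m ∉ G := fun h => hm (hG h)
    have hsum : ∑ e ∈ E, Xc p (insert m G) e * a e ((insert m G).filter (fun f => r f < r e)) =
        ∑ e ∈ E, Xc p G e * a e (G.filter (fun f => r f < r e)) := by
      refine Finset.sum_congr rfl fun e he => ?_
      have hne : e ≠ m := fun h => hm (h ▸ he)
      rw [Finset.filter_insert, if_neg (not_lt.2 (hmax e he))]
      simp [Xc, hne]
    rw [Finset.sum_insert hm, Finset.sum_insert hm, hsum, Finset.filter_insert,
      if_neg (lt_irrefl _)]
    set A := a m (G.filter (fun f => r f < r m)) with hA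
    set B := ∑ e ∈ E, Xc p G e * a e (G.filter (fun f => r f < r e))
    have hX0 : Xc p G m = 0 - p := by simp [Xc, hmG]
    have hX1 : Xc p (insert m G) m = 1 - p := by simp [Xc]
    rw [hX0, hX1, mul_add, mul_add, Real.exp_add, Real.exp_add]
    have hb := bernoulli_mgf h0 h1 (t * A)
    have hA2 : A ^ 2 ≤ T m ^ 2 := by
      have := ha m (G.filter (fun f => r f < r m))
      exact sq_le_sq.2 (this.trans (le_abs_self _))
    have hT : Real.exp ((t * A) ^ 2) ≤ Real.exp ((t * T m) ^ 2) := by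
      refine Real.exp_le_exp.2 ?_
      rw [mul_pow, mul_pow]
      exact mul_le_mul_of_nonneg_left hA2 (sq_nonneg t)
    have := mul_le_mul_of_nonneg_right (hb.trans hT) (Real.exp_nonneg (t * B))
    refine le_trans (le_of_eq ?_) this
    rw [show t * ((0 - p) * A) = t * A * (0 - p) by ring,
      show t * ((1 - p) * A) = t * A * (1 - p) by ring]
    ring

lemma linear_tail {p : ℝ} (h0 : 0 ≤ p) (h1 : p ≤ 1) (E : Finset α) (c : α → ℝ) {V s : ℝ}
    (hV : 0 < V) (hs : 0 ≤ s) (hc : ∑ e ∈ E, c e ^ 2 ≤ V) :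
    Pw E p (fun G => s < |∑ e ∈ E, c e * Xc p G e|) ≤ 2 * Real.exp (-(s ^ 2 / (4 * V))) := by
  refine chernoff h0 h1 E _ hV hs fun t => ?_
  have := azuma_mgf h0 h1 (fun _ => 0) (fun e _ => c e) (fun e => |c e|) (fun _ _ => le_rfl) t E
  simp only [sq_abs] at this
  simp only [mul_comm (c _)]
  exact this.trans (Real.exp_le_exp.2 (mul_le_mul_of_nonneg_left hc (sq_nonneg t)))

/-- Tail bound for a strictly triangular quadratic form in the `Xc p G e`. Each inner sum exceeds `T`
with small probability by the linear bound; truncated at `T`, the inner sums are bounded predictable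
coefficients, to which `azuma_mgf` applies. -/
lemma quad_tail {p : ℝ} (h0 : 0 ≤ p) (h1 : p ≤ 1) (E : Finset α) (r : α → ℕ)
    (M : α → α → ℝ) {R T s V : ℝ} (hR : 0 < R) (hT : 0 ≤ T) (hs : 0 ≤ s) (hV : 0 < V)
    (hM : ∀ e ∈ E, ∑ f ∈ E, M e f ^ 2 ≤ R) (hTV : E.card * T ^ 2 ≤ V) :
    Pw E p (fun G => s < |∑ e ∈ E, Xc p G e *
        ∑ f ∈ E.filter (fun f => r f < r e), M e f * Xc p G f|)
      ≤ E.card * (2 * Real.exp (-(T ^ 2 / (4 * R)))) + 2 * Real.exp (-(s ^ 2 / (4 * V))) := by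
  classical
  set Z : α → Finset α → ℝ := fun e G => ∑ f ∈ E.filter (fun f => r f < r e), M e f * Xc p G f
    with hZ
  set a : α → Finset α → ℝ := fun e H => if |Z e H| ≤ T then Z e H else 0 with haDef
  have ha : ∀ e H, |a e H| ≤ T := by
    intro e H
    simp only [haDef]
    split_ifs with h
    · exact h
    · simpa using hT
  have hZf : ∀ e G, Z e (G.filter (fun f => r f < r e)) = Z e G := by
    intro e G
    refine Finset.sum_congr rfl fun f hf => ?_
    have := (Finset.mem_filter.1 hf).2
    simp [Xc, this]
  have hbad : Pw E p (fun G => ∃ e ∈ E, T < |Z e G|) ≤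
      E.card * (2 * Real.exp (-(T ^ 2 / (4 * R)))) := by
    refine (Pw_exists E h0 h1 (fun e G => T < |Z e G|)).trans ?_
    rw [← nsmul_eq_mul]
    refine Finset.sum_le_card_nsmul _ _ _ fun e he => ?_
    have := linear_tail h0 h1 E (fun f => if r f < r e then M e f else 0) hR hT (by
      refine le_trans (Finset.sum_le_sum fun f _ => ?_) (hM e he)
      split_ifs
      · exact le_rfl
      · simpa using sq_nonneg (M e f))
    simpa [hZ, Finset.sum_filter, ite_mul] using this
  have hmart : Pw E p (fun G => s < |∑ e ∈ E, Xc p G e * a e (G.filter (fun f => r f < r e))|) ≤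
      2 * Real.exp (-(s ^ 2 / (4 * V))) := by
    refine chernoff h0 h1 E _ hV hs fun t => ?_
    refine (azuma_mgf h0 h1 r a (fun _ => T) ha t E).trans ?_
    refine Real.exp_le_exp.2 (mul_le_mul_of_nonneg_left ?_ (sq_nonneg t))
    simpa using hTV
  refine le_trans (Pw_mono h0 h1 ?_) ((Pw_or h0 h1 _ _).trans (add_le_add hbad hmart))
  intro G _ hG
  by_cases h : ∃ e ∈ E, T < |Z e G|
  · exact Or.inl h
  · right
    push Not at h
    have : ∑ e ∈ E, Xc p G e * a e (G.filter (fun f => r f < r e)) =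
        ∑ e ∈ E, Xc p G e * Z e G := by
      refine Finset.sum_congr rfl fun e he => ?_
      simp only [haDef, hZf, h e he, if_true]
    rw [this]
    exact hG

/-- Because indicators are idempotent, the diagonal terms of a quadratic form are affine in `Xc`. -/
lemma Xc_sq (p : ℝ) (G : Finset α) (e : α) :
    Xc p G e * Xc p G e = p * (1 - p) + (1 - 2 * p) * Xc p G e := by
  unfold Xc; split_ifs <;> ring

/-- Diagonal part plus lower triangular part of a (not necessarily symmetric) quadratic form. -/
lemma quad_split (E : Finset α) (r : α → ℕ) (hr : Function.Injective r) (M : α → α → ℝ)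
    (X : α → ℝ) :
    ∑ e ∈ E, ∑ f ∈ E, M e f * (X e * X f) = ∑ e ∈ E, M e e * (X e * X e) +
      ∑ e ∈ E, X e * ∑ f ∈ E.filter (fun f => r f < r e), (M e f + M f e) * X f := by
  have h1 : ∀ e ∈ E, ∑ f ∈ E, M e f * (X e * X f) = M e e * (X e * X e) +
      (∑ f ∈ E, if r f < r e then M e f * (X e * X f) else 0) +
      (∑ f ∈ E, if r e < r f then M e f * (X e * X f) else 0) := by
    intro e he
    have : M e e * (X e * X e) = ∑ f ∈ E, if e = f then M e f * (X e * X f) else 0 := by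
      rw [Finset.sum_ite_eq]; simp [he]
    rw [this, ← Finset.sum_add_distrib, ← Finset.sum_add_distrib]
    refine Finset.sum_congr rfl fun f _ => ?_
    rcases lt_trichotomy (r e) (r f) with h | h | h
    · have : e ≠ f := fun hh => by simp [hh] at h
      simp [h, this, h.le]
    · have := hr h
      simp [this]
    · have : e ≠ f := fun hh => by simp [hh] at h
      simp [h, this, h.le]
  rw [Finset.sum_congr rfl h1, Finset.sum_add_distrib, Finset.sum_add_distrib, add_assoc]
  congr 1
  rw [Finset.sum_comm (f := fun e f => if r e < r f then M e f * (X e * X f) else 0),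
    ← Finset.sum_add_distrib]
  refine Finset.sum_congr rfl fun e _ => ?_
  rw [Finset.sum_filter, Finset.mul_sum, ← Finset.sum_add_distrib]
  refine Finset.sum_congr rfl fun f _ => ?_
  split_ifs <;> ring

end RandomSubset

/-! ### Degrees in the random graph -/

section Graph

variable {n : ℕ}

/-- The edges of the complete graph joining `x` to a vertex of `B`. -/
def starEdges (x : Fin n) (B : Finset (Fin n)) : Finset (Sym2 (Fin n)) :=
  (B.erase x).image (fun y => s(x, y))

/-- Indicator of `starEdges x B`. -/
def uu (x : Fin n) (B : Finset (Fin n)) (e : Sym2 (Fin n)) : ℝ := if e ∈ starEdges x B then 1 else 0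

/-- The centred degree `d_B(x) - 𝔼 d_B(x)`, as a linear form in the centred edge indicators. -/
def Dc (p : ℝ) (G : Finset (Sym2 (Fin n))) (B : Finset (Fin n)) (x : Fin n) : ℝ :=
  ∑ e ∈ completeEdges n, uu x B e * Xc p G e

lemma uu_nonneg (x : Fin n) (B : Finset (Fin n)) (e : Sym2 (Fin n)) : 0 ≤ uu x B e := by
  unfold uu; split_ifs <;> norm_num

lemma uu_le_one (x : Fin n) (B : Finset (Fin n)) (e : Sym2 (Fin n)) : uu x B e ≤ 1 := by
  unfold uu; split_ifs <;> norm_num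

lemma mem_star {x : Fin n} {B : Finset (Fin n)} {e : Sym2 (Fin n)} :
    e ∈ starEdges x B ↔ ∃ y, (y ≠ x ∧ y ∈ B) ∧ s(x, y) = e := by
  simp [starEdges]

lemma star_subset (x : Fin n) (B : Finset (Fin n)) : starEdges x B ⊆ completeEdges n := by
  intro e he
  obtain ⟨y, ⟨hy, _⟩, rfl⟩ := mem_star.1 he
  simp [completeEdges, hy.symm]

lemma star_card (x : Fin n) (B : Finset (Fin n)) : (starEdges x B).card = (B.erase x).card :=
  Finset.card_image_of_injective _ fun _ _ h => Sym2.congr_right.1 h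

lemma star_inter (x : Fin n) (B B' : Finset (Fin n)) :
    starEdges x B ∩ starEdges x B' = starEdges x (B ∩ B') := by
  ext e
  simp only [Finset.mem_inter, mem_star]
  constructor
  · rintro ⟨⟨y, ⟨h1, h2⟩, rfl⟩, ⟨z, ⟨_, h4⟩, h5⟩⟩
    have : z = y := Sym2.congr_right.1 h5
    exact ⟨y, ⟨h1, h2, this ▸ h4⟩, rfl⟩
  · rintro ⟨y, ⟨h1, h2, h3⟩, rfl⟩
    exact ⟨⟨y, ⟨h1, h2⟩, rfl⟩, ⟨y, ⟨h1, h3⟩, rfl⟩⟩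

lemma sum_uu (x : Fin n) (B : Finset (Fin n)) :
    ∑ e ∈ completeEdges n, uu x B e = ((B.erase x).card : ℝ) := by
  unfold uu
  rw [Finset.sum_ite_mem, Finset.inter_eq_right.2 (star_subset x B)]
  simp [star_card]

lemma uu_mul_uu (x : Fin n) (B B' : Finset (Fin n)) (e : Sym2 (Fin n)) :
    uu x B e * uu x B' e = uu x (B ∩ B') e := by
  unfold uu
  rw [← star_inter]
  by_cases h : e ∈ starEdges x B <;> by_cases hB : e ∈ starEdges x B' <;> simp [h, hB]

/-- An edge lies in at most two stars, those of its endpoints. -/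
lemma sum_uu_vertex (A B : Finset (Fin n)) (e : Sym2 (Fin n)) : ∑ x ∈ A, uu x B e ≤ 2 := by
  induction e using Sym2.ind with
  | _ a b =>
    unfold uu
    rw [Finset.sum_boole]
    have hsub : A.filter (fun x => s(a, b) ∈ starEdges x B) ⊆ {a, b} := by
      intro x hx
      obtain ⟨y, _, hy⟩ := mem_star.1 (Finset.mem_filter.1 hx).2
      have : x ∈ s(a, b) := hy ▸ Sym2.mem_mk_left x y
      simpa using this
    exact_mod_cast (Finset.card_le_card hsub).trans Finset.card_le_two

lemma card_completeEdges_le (n : ℕ) : ((completeEdges n).card : ℝ) ≤ (n : ℝ) ^ 2 := by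
  have h : (completeEdges n).card ≤ Fintype.card (Fin n × Fin n) :=
    (Finset.card_le_univ _).trans
      (Fintype.card_le_of_surjective (fun q : Fin n × Fin n => s(q.1, q.2))
        (fun e => by
          induction e using Sym2.ind with
          | _ a b => exact ⟨(a, b), rfl⟩))
  have h2 : (completeEdges n).card ≤ n ^ 2 := by simpa [sq] using h
  exact_mod_cast h2

lemma dS_eq {p : ℝ} {G : Finset (Sym2 (Fin n))} (hG : G ⊆ completeEdges n)
    (B : Finset (Fin n)) (x : Fin n) :
    (dS G B x : ℝ) = Dc p G B x + p * ((B.erase x).card : ℝ) := by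
  have h1 : dS G B x = (starEdges x B ∩ G).card := by
    unfold dS starEdges
    rw [← Finset.filter_mem_eq_inter, Finset.filter_image,
      Finset.card_image_of_injective _ (fun _ _ h => Sym2.congr_right.1 h)]
    congr 1
    ext y
    simp only [Finset.mem_filter, Finset.mem_erase]
    constructor
    · rintro ⟨hy, hyG⟩
      refine ⟨⟨?_, hy⟩, hyG⟩
      rintro rfl
      have := hG hyG
      simp [completeEdges] at this
    · rintro ⟨⟨_, hy⟩, hyG⟩
      exact ⟨hy, hyG⟩
  unfold Dc Xc
  simp_rw [mul_sub]
  rw [Finset.sum_sub_distrib, ← Finset.sum_mul, sum_uu, h1]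
  have h2 : ∑ e ∈ completeEdges n, uu x B e * (if e ∈ G then (1:ℝ) else 0) =
      ((starEdges x B ∩ G).card : ℝ) := by
    unfold uu
    simp_rw [ite_mul, one_mul, zero_mul]
    rw [Finset.sum_ite_mem, Finset.inter_eq_right.2 (star_subset x B), Finset.sum_ite_mem]
    simp
  rw [h2]; ring

/-- Covariance of `f` and `g` under the uniform distribution on `A`. -/
def covu {α : Type*} (A : Finset α) (f g : α → ℝ) : ℝ :=
  Exu A (fun x => f x * g x) - Exu A f * Exu A g

lemma varu_eq_covu {α : Type*} {A : Finset α} (hA : A.Nonempty) (f : α → ℝ) :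
    Varu A f = covu A f f := by
  have h : (A.card : ℝ) ≠ 0 := by exact_mod_cast hA.card_pos.ne'
  unfold Varu covu
  set m := Exu A f with hm
  have hm' : ∑ x ∈ A, f x = m * A.card := by rw [hm, Exu]; field_simp
  unfold Exu
  have : ∀ x, (f x - m) ^ 2 = f x * f x - 2 * m * f x + m ^ 2 := fun x => by ring
  simp_rw [this]
  rw [Finset.sum_add_distrib, Finset.sum_sub_distrib, ← Finset.mul_sum, hm']
  simp only [Finset.sum_const, nsmul_eq_mul]
  field_simp
  ring

lemma covu_shift {α : Type*} {A : Finset α} (hA : A.Nonempty) {f g f' g' : α → ℝ} {c d : ℝ}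
    (hf : ∀ x ∈ A, f' x = f x + c) (hg : ∀ x ∈ A, g' x = g x + d) :
    covu A f' g' = covu A f g := by
  have h : (A.card : ℝ) ≠ 0 := by exact_mod_cast hA.card_pos.ne'
  unfold covu Exu
  have e1 : ∑ x ∈ A, f' x = ∑ x ∈ A, f x + A.card * c := by
    rw [Finset.sum_congr rfl hf, Finset.sum_add_distrib]; simp
  have e2 : ∑ x ∈ A, g' x = ∑ x ∈ A, g x + A.card * d := by
    rw [Finset.sum_congr rfl hg, Finset.sum_add_distrib]; simp
  have e3 : ∑ x ∈ A, f' x * g' x =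
      ∑ x ∈ A, f x * g x + d * ∑ x ∈ A, f x + c * ∑ x ∈ A, g x + A.card * (c * d) := by
    have : ∀ x ∈ A, f' x * g' x = f x * g x + d * f x + c * g x + c * d := fun x hx => by
      rw [hf x hx, hg x hx]; ring
    rw [Finset.sum_congr rfl this]
    simp [Finset.sum_add_distrib, Finset.mul_sum]
  rw [e1, e2, e3]
  field_simp
  ring

/-- Coefficient of `Xc p G e * Xc p G f` in `∑ x ∈ A, Dc p G B x * Dc p G B' x`. -/
def Mm (A B B' : Finset (Fin n)) (e f : Sym2 (Fin n)) : ℝ := ∑ x ∈ A, uu x B e * uu x B' f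

lemma Mm_nonneg (A B B' : Finset (Fin n)) (e f : Sym2 (Fin n)) : 0 ≤ Mm A B B' e f :=
  Finset.sum_nonneg fun _ _ => mul_nonneg (uu_nonneg _ _ _) (uu_nonneg _ _ _)

lemma Mm_le_two (A B B' : Finset (Fin n)) (e f : Sym2 (Fin n)) : Mm A B B' e f ≤ 2 :=
  le_trans (Finset.sum_le_sum fun _ _ =>
    mul_le_of_le_one_right (uu_nonneg _ _ _) (uu_le_one _ _ _)) (sum_uu_vertex A B e)

lemma Mm_swap (A B B' : Finset (Fin n)) (e f : Sym2 (Fin n)) : Mm A B B' e f = Mm A B' B f e :=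
  Finset.sum_congr rfl fun _ _ => mul_comm _ _

lemma sum_Mm_sq (A B B' : Finset (Fin n)) (e : Sym2 (Fin n)) :
    ∑ f ∈ completeEdges n, Mm A B B' e f ^ 2 ≤ 4 * n := by
  have h1 : ∑ f ∈ completeEdges n, Mm A B B' e f ^ 2 ≤
      2 * ∑ f ∈ completeEdges n, Mm A B B' e f := by
    rw [Finset.mul_sum]
    refine Finset.sum_le_sum fun f _ => ?_
    nlinarith [Mm_nonneg A B B' e f, Mm_le_two A B B' e f]
  have h2 : ∑ f ∈ completeEdges n, Mm A B B' e f ≤ 2 * n := by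
    unfold Mm
    rw [Finset.sum_comm]
    have : ∀ x ∈ A, ∑ f ∈ completeEdges n, uu x B e * uu x B' f ≤ uu x B e * n := by
      intro x _
      rw [← Finset.mul_sum, sum_uu]
      refine mul_le_mul_of_nonneg_left ?_ (uu_nonneg _ _ _)
      exact_mod_cast (Finset.card_le_univ _).trans (by simp)
    refine (Finset.sum_le_sum this).trans ?_
    rw [← Finset.sum_mul]
    exact mul_le_mul_of_nonneg_right (sum_uu_vertex A B e) (Nat.cast_nonneg n)
  linarith

lemma sum_Mm_symm_sq (A B B' : Finset (Fin n)) (e : Sym2 (Fin n)) :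
    ∑ f ∈ completeEdges n, (Mm A B B' e f + Mm A B B' f e) ^ 2 ≤ 16 * n := by
  have h1 := sum_Mm_sq A B B' e
  have h2 := sum_Mm_sq A B' B e
  have : ∑ f ∈ completeEdges n, (Mm A B B' e f + Mm A B B' f e) ^ 2 ≤
      ∑ f ∈ completeEdges n, (2 * Mm A B B' e f ^ 2 + 2 * Mm A B' B e f ^ 2) := by
    refine Finset.sum_le_sum fun f _ => ?_
    rw [Mm_swap A B B' f e]
    nlinarith [sq_nonneg (Mm A B B' e f - Mm A B' B e f)]
  rw [Finset.sum_add_distrib, ← Finset.mul_sum, ← Finset.mul_sum] at this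
  linarith

/-- The sum of products of centred degrees is its mean plus a linear form plus a strictly triangular
quadratic form in the centred edge indicators; `r` is an arbitrary enumeration of the edges. -/
lemma sum_Dc_mul (r : Sym2 (Fin n) → ℕ) (hr : Function.Injective r) (p : ℝ)
    (G : Finset (Sym2 (Fin n))) (A B B' : Finset (Fin n)) :
    ∑ x ∈ A, Dc p G B x * Dc p G B' x =
      p * (1 - p) * ∑ x ∈ A, (((B ∩ B').erase x).card : ℝ) +
      (1 - 2 * p) * ∑ e ∈ completeEdges n, Mm A B B' e e * Xc p G e +
      ∑ e ∈ completeEdges n, Xc p G e * ∑ f ∈ (completeEdges n).filter (fun f => r f < r e),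
        (Mm A B B' e f + Mm A B B' f e) * Xc p G f := by
  have h1 : ∑ x ∈ A, Dc p G B x * Dc p G B' x =
      ∑ e ∈ completeEdges n, ∑ f ∈ completeEdges n, Mm A B B' e f * (Xc p G e * Xc p G f) := by
    unfold Dc Mm
    simp_rw [Finset.sum_mul_sum, Finset.sum_mul]
    rw [Finset.sum_comm]
    refine Finset.sum_congr rfl fun e _ => ?_
    rw [Finset.sum_comm]
    exact Finset.sum_congr rfl fun f _ => Finset.sum_congr rfl fun x _ => by ring
  rw [h1, quad_split _ r hr]
  congr 1
  have h2 : ∑ x ∈ A, (((B ∩ B').erase x).card : ℝ) = ∑ e ∈ completeEdges n, Mm A B B' e e := by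
    unfold Mm
    rw [Finset.sum_comm]
    refine Finset.sum_congr rfl fun x _ => ?_
    simp_rw [uu_mul_uu, sum_uu]
  rw [h2, Finset.mul_sum, Finset.mul_sum, ← Finset.sum_add_distrib]
  refine Finset.sum_congr rfl fun e _ => ?_
  rw [Xc_sq]; ring

lemma sum_Dc (p : ℝ) (G : Finset (Sym2 (Fin n))) (A B : Finset (Fin n)) :
    ∑ x ∈ A, Dc p G B x = ∑ e ∈ completeEdges n, (∑ x ∈ A, uu x B e) * Xc p G e := by
  unfold Dc
  rw [Finset.sum_comm]
  simp_rw [Finset.sum_mul]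

lemma linear_tail_edges {p : ℝ} (h0 : 0 ≤ p) (h1 : p ≤ 1) (hn : 0 < n) {y : ℝ} (hy : 0 ≤ y)
    (c : Sym2 (Fin n) → ℝ) (hc0 : ∀ e, 0 ≤ c e) (hc : ∀ e, c e ≤ 2) :
    Pw (completeEdges n) p (fun G => n * y < |∑ e ∈ completeEdges n, c e * Xc p G e|) ≤
      2 * Real.exp (-(y ^ 2 / 64)) := by
  have hn' : (0:ℝ) < n := by exact_mod_cast hn
  have hV : ∑ e ∈ completeEdges n, c e ^ 2 ≤ 4 * (n:ℝ) ^ 2 := by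
    have : ∑ e ∈ completeEdges n, c e ^ 2 ≤ ∑ e ∈ completeEdges n, (4:ℝ) :=
      Finset.sum_le_sum fun e _ => by nlinarith [hc0 e, hc e]
    simp only [Finset.sum_const, nsmul_eq_mul] at this
    linarith [card_completeEdges_le n]
  refine (linear_tail h0 h1 (completeEdges n) c (V := 4 * (n:ℝ) ^ 2) (s := n * y)
    (by positivity) (by positivity) hV).trans ?_
  have : y ^ 2 / 64 ≤ (n * y) ^ 2 / (4 * (4 * (n:ℝ) ^ 2)) := by
    have : (n * y) ^ 2 / (4 * (4 * (n:ℝ) ^ 2)) = y ^ 2 / 16 := by field_simp; ring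
    rw [this]; nlinarith [sq_nonneg y]
  gcongr

/-- Concentration of the empirical covariance over `x ∈ A` of `d_B(x)` and `d_B'(x)`. The expected
degrees are assumed constant on `A`, so that the degrees may be centred without changing the
covariance. Here `q = √n`, and `y` measures the deviation on the natural scale of each quantity. -/
lemma cov_tail {p : ℝ} (h0 : 0 ≤ p) (h1 : p ≤ 1) (hn : 0 < n) {y q : ℝ} (hy : 1 ≤ y)
    (hq0 : 0 < q) (hq : q ^ 2 = n) (A B B' : Finset (Fin n)) (hA : A.Nonempty) {b b' : ℝ}
    (hb : ∀ x ∈ A, ((B.erase x).card : ℝ) = b) (hb' : ∀ x ∈ A, ((B'.erase x).card : ℝ) = b') :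
    Pw (completeEdges n) p (fun G =>
      ¬ |covu A (fun x => (dS G B x : ℝ)) (fun x => (dS G B' x : ℝ)) -
          p * (1 - p) * (∑ x ∈ A, (((B ∩ B').erase x).card : ℝ)) / A.card| ≤
        (n * q * y ^ 2 + n * y) / A.card + (n * y / A.card) ^ 2) ≤
      10 * (n:ℝ) ^ 2 * Real.exp (-(y ^ 2 / 64)) := by
  have hn' : (0:ℝ) < n := by exact_mod_cast hn
  have hn1 : (1:ℝ) ≤ n := by exact_mod_cast hn
  have hy0 : 0 ≤ y := by linarith
  have ha : (0:ℝ) < A.card := by exact_mod_cast hA.card_pos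
  set E := completeEdges n with hE
  obtain ⟨r, hr⟩ : ∃ r : Sym2 (Fin n) → ℕ, Function.Injective r :=
    ⟨fun e => Fintype.equivFin _ e, fun e f h =>
      (Fintype.equivFin _).injective (Fin.val_injective h)⟩
  have l1 := linear_tail_edges h0 h1 hn hy0 (fun e => ∑ x ∈ A, uu x B e)
    (fun e => Finset.sum_nonneg fun _ _ => uu_nonneg _ _ _) (sum_uu_vertex A B)
  have l2 := linear_tail_edges h0 h1 hn hy0 (fun e => ∑ x ∈ A, uu x B' e)
    (fun e => Finset.sum_nonneg fun _ _ => uu_nonneg _ _ _) (sum_uu_vertex A B')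
  have l3 := linear_tail_edges h0 h1 hn hy0 (fun e => Mm A B B' e e)
    (fun e => Mm_nonneg _ _ _ _ _) (fun e => Mm_le_two _ _ _ _ _)
  have l4 := quad_tail h0 h1 E r (fun e f => Mm A B B' e f + Mm A B B' f e)
    (R := 16 * n) (T := q * y) (s := n * q * y ^ 2) (V := (n:ℝ) ^ 2 * (q * y) ^ 2)
    (by positivity) (by positivity) (by positivity) (by positivity)
    (fun e _ => sum_Mm_symm_sq A B B' e)
    (mul_le_mul_of_nonneg_right (card_completeEdges_le n) (sq_nonneg _))
  have x1 : (q * y) ^ 2 / (4 * (16 * (n:ℝ))) = y ^ 2 / 64 := by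
    rw [mul_pow, hq]; field_simp; norm_num
  have x2 : (n * q * y ^ 2) ^ 2 / (4 * ((n:ℝ) ^ 2 * (q * y) ^ 2)) = y ^ 2 / 4 := by
    field_simp
  rw [x1, x2] at l4
  have x3 : Real.exp (-(y ^ 2 / 4)) ≤ Real.exp (-(y ^ 2 / 64)) :=
    Real.exp_le_exp.2 (by nlinarith [sq_nonneg y])
  set w := Real.exp (-(y ^ 2 / 64)) with hw
  have hw0 : 0 ≤ w := Real.exp_nonneg _
  have x4 : (E.card : ℝ) * (2 * w) ≤ (n:ℝ) ^ 2 * (2 * w) :=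
    mul_le_mul_of_nonneg_right (card_completeEdges_le n) (by positivity)
  have x5 : w ≤ (n:ℝ) ^ 2 * w := le_mul_of_one_le_left hw0 (by nlinarith)
  -- outside the four exceptional events bounded by `l1`, `l2`, `l3`, `l4` the estimate is deterministic
  refine le_trans (Pw_mono h0 h1 ?_) ((Pw_or h0 h1 _ _).trans ((add_le_add l1
    ((Pw_or h0 h1 _ _).trans (add_le_add l2
      ((Pw_or h0 h1 _ _).trans (add_le_add l3 l4))))).trans ?_))
  · intro G hG hbad
    by_contra hcon
    push Not at hcon
    obtain ⟨g1, g2, g3, g4⟩ := hcon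
    apply hbad
    have hs : covu A (fun x => (dS G B x : ℝ)) (fun x => (dS G B' x : ℝ)) =
        covu A (Dc p G B) (Dc p G B') :=
      covu_shift hA (c := p * b) (d := p * b')
        (fun x hx => by rw [dS_eq hG, hb x hx]) (fun x hx => by rw [dS_eq hG, hb' x hx])
    rw [hs]
    unfold covu Exu
    rw [sum_Dc_mul r hr, sum_Dc, sum_Dc]
    set L1 := ∑ e ∈ E, (∑ x ∈ A, uu x B e) * Xc p G e
    set L2 := ∑ e ∈ E, (∑ x ∈ A, uu x B' e) * Xc p G e
    set L3 := ∑ e ∈ E, Mm A B B' e e * Xc p G e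
    set Q := ∑ e ∈ E, Xc p G e * ∑ f ∈ E.filter (fun f => r f < r e),
      (Mm A B B' e f + Mm A B B' f e) * Xc p G f
    set K := ∑ x ∈ A, (((B ∩ B').erase x).card : ℝ)
    have hid : (p * (1 - p) * K + (1 - 2 * p) * L3 + Q) / A.card - L1 / A.card * (L2 / A.card) -
        p * (1 - p) * K / A.card =
        (Q + (1 - 2 * p) * L3) / A.card - (L1 / A.card) * (L2 / A.card) := by
      ring
    rw [hid]
    refine (abs_sub _ _).trans (add_le_add ?_ ?_)
    · rw [abs_div, abs_of_pos ha]
      refine div_le_div_of_nonneg_right ?_ ha.le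
      refine (abs_add_le _ _).trans (add_le_add g4 ?_)
      rw [abs_mul]
      have : |1 - 2 * p| ≤ 1 := abs_le.2 ⟨by linarith, by linarith⟩
      calc |1 - 2 * p| * |L3| ≤ 1 * |L3| := mul_le_mul_of_nonneg_right this (abs_nonneg _)
        _ ≤ n * y := by simpa using g3
    · rw [abs_mul, abs_div, abs_div, abs_of_pos ha, sq]
      gcongr
  · linarith

end Graph

/-! ### Asymptotic estimates and conclusion -/

lemma PrGnp_eq_Pw (n : ℕ) (p : ℝ) (P : Finset (Sym2 (Fin n)) → Prop) :
    PrGnp n p P = Pw (completeEdges n) p P := by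
  unfold PrGnp Pw Ew
  refine Finset.sum_congr rfl fun G _ => ?_
  by_cases h : P G <;> simp [h]

/-- The left side is the total of three bounds from `cov_tail` with `y = n ^ (ε / 2)`. -/
lemma eventually_tail_le {ε : ℝ} (hε : 0 < ε) : ∃ n₀ : ℕ, ∀ n ≥ n₀,
    30 * (n:ℝ) ^ 2 * Real.exp (-(((n:ℝ) ^ (ε / 2)) ^ 2 / 64)) ≤ Real.exp (-(n:ℝ) ^ (ε / 2)) := by
  have hy : Filter.Tendsto (fun n : ℕ => (n:ℝ) ^ (ε / 2)) Filter.atTop Filter.atTop :=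
    (tendsto_rpow_atTop (by positivity)).comp tendsto_natCast_atTop_atTop
  have ht := (tendsto_rpow_mul_exp_neg_mul_atTop_nhds_zero (4 / ε) 1 one_pos).comp hy
  have h1 := ht.eventually (Iio_mem_nhds (show (0:ℝ) < 1 / 30 by norm_num))
  -- `y ≥ 128` gives `y ^ 2 / 64 ≥ 2 * y`
  have h2 := hy.eventually (Filter.eventually_ge_atTop 128)
  obtain ⟨n₀, h⟩ := Filter.eventually_atTop.1 (h1.and h2)
  refine ⟨n₀, fun n hn => ?_⟩
  obtain ⟨ha, hb⟩ := h n hn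
  simp only [Function.comp] at ha
  have hp : ((n:ℝ) ^ (ε / 2)) ^ (4 / ε) = (n:ℝ) ^ 2 := by
    rw [← Real.rpow_mul (Nat.cast_nonneg n), ← Real.rpow_natCast]
    congr 1; push_cast; field_simp; norm_num
  rw [hp] at ha
  set y := (n:ℝ) ^ (ε / 2)
  have h3 : Real.exp (-(y ^ 2 / 64)) ≤ Real.exp (-1 * y) * Real.exp (-y) := by
    rw [← Real.exp_add]
    exact Real.exp_le_exp.2 (by nlinarith)
  calc 30 * (n:ℝ) ^ 2 * Real.exp (-(y ^ 2 / 64))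
      ≤ 30 * (n:ℝ) ^ 2 * (Real.exp (-1 * y) * Real.exp (-y)) := by gcongr
    _ = (30 * ((n:ℝ) ^ 2 * Real.exp (-1 * y))) * Real.exp (-y) := by ring
    _ ≤ 1 * Real.exp (-y) := by
      refine mul_le_mul_of_nonneg_right ?_ (Real.exp_nonneg _)
      linarith
    _ = _ := one_mul _

/-- The error term of `cov_tail`, for a set `A` of size `a ≥ δ n`, in terms of `q * y ^ 2`, which is
`n ^ (1/2 + ε)` when `q = √n` and `y = n ^ (ε / 2)`. -/
lemma error_le {δ n q y a : ℝ} (hδ : 0 < δ) (hn : 0 < n) (hq : 1 ≤ q) (hy : 1 ≤ y)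
    (ha : δ * n ≤ a) :
    (n * q * y ^ 2 + n * y) / a + (n * y / a) ^ 2 ≤ (2 / δ + 1 / δ ^ 2) * (q * y ^ 2) := by
  have hδn : 0 < δ * n := by positivity
  have ha0 : 0 < a := lt_of_lt_of_le hδn ha
  have hqy : y ≤ q * y ^ 2 := by nlinarith [mul_nonneg (sub_nonneg.2 hq) (sq_nonneg y)]
  have hqy2 : y ^ 2 ≤ q * y ^ 2 := le_mul_of_one_le_left (sq_nonneg y) hq
  have h1 : (n * q * y ^ 2 + n * y) / a ≤ (n * q * y ^ 2 + n * y) / (δ * n) := by gcongr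
  have h2 : n * y / a ≤ n * y / (δ * n) := by gcongr
  have h3 : (n * y / a) ^ 2 ≤ (n * y / (δ * n)) ^ 2 := by gcongr
  have e1 : (n * q * y ^ 2 + n * y) / (δ * n) = (q * y ^ 2 + y) / δ := by field_simp
  have e2 : (n * y / (δ * n)) ^ 2 = y ^ 2 / δ ^ 2 := by field_simp
  rw [e1] at h1
  rw [e2] at h3
  calc _ ≤ (q * y ^ 2 + y) / δ + y ^ 2 / δ ^ 2 := add_le_add h1 h3
    _ ≤ (q * y ^ 2 + q * y ^ 2) / δ + q * y ^ 2 / δ ^ 2 := by gcongr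
    _ = _ := by ring

/-- Lemma 2.5: concentration of degree variances/covariances.
Fix `δ, ε > 0`. There are `C > 0`, `η > 0`, `n₀` such that for all `n ≥ n₀`, `p ∈ [δ, 1-δ]`,
`k` with `k/n ∈ [δ, 1-δ]`, and any fixed `k`-set `S`, with probability at least
`1 - exp(-n^η)` over `G_{n,p}`, the three variance/covariance bounds hold (with `x` uniform
on `S` and `x̄` uniform on `S̄`). -/
theorem stmt_7 (δ ε : ℝ) (hδ : 0 < δ) (hε : 0 < ε) :
    ∃ C > (0:ℝ), ∃ η > (0:ℝ), ∃ n₀ : ℕ, ∀ n ≥ n₀, ∀ p : ℝ, δ ≤ p → p ≤ 1 - δ →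
      ∀ k : ℕ, δ ≤ (k:ℝ)/n → (k:ℝ)/n ≤ 1 - δ →
      ∀ S : Finset (Fin n), S.card = k →
      PrGnp n p (fun G =>
          |Varu S (fun x => (dS G S x : ℝ)) - p * (1 - p) * k| ≤ C * (n:ℝ) ^ ((1:ℝ)/2 + ε) ∧
          |Varu Sᶜ (fun x => (dS G S x : ℝ)) - p * (1 - p) * k| ≤ C * (n:ℝ) ^ ((1:ℝ)/2 + ε) ∧
          |Exu Sᶜ (fun x => (dS G S x : ℝ) * (dS G Sᶜ x : ℝ)) -
              Exu Sᶜ (fun x => (dS G S x : ℝ)) * Exu Sᶜ (fun x => (dS G Sᶜ x : ℝ))|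
            ≤ C * (n:ℝ) ^ ((1:ℝ)/2 + ε))
        ≥ 1 - Real.exp (-(n:ℝ) ^ η) := by
  obtain ⟨n₀, hn₀⟩ := eventually_tail_le hε
  refine ⟨2 / δ + 1 / δ ^ 2 + 1, by positivity, ε / 2, by positivity, max n₀ 1, ?_⟩
  intro n hn p hp0 hp1 k hk0 hk1 S hS
  have hn1 : 1 ≤ n := (le_max_right _ _).trans hn
  have hnR : (1:ℝ) ≤ n := by exact_mod_cast hn1
  have hnpos : (0:ℝ) < n := by linarith
  have h0 : 0 ≤ p := by linarith
  have h1 : p ≤ 1 := by linarith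
  set y : ℝ := (n:ℝ) ^ (ε / 2) with hy
  set q : ℝ := (n:ℝ) ^ ((1:ℝ) / 2) with hq
  have hy1 : 1 ≤ y := Real.one_le_rpow hnR (by positivity)
  have hq1 : 1 ≤ q := Real.one_le_rpow hnR (by positivity)
  have hq2 : q ^ 2 = n := by
    rw [hq, ← Real.rpow_natCast, ← Real.rpow_mul hnpos.le]; norm_num
  have hy2 : y ^ 2 = (n:ℝ) ^ ε := by
    rw [hy, ← Real.rpow_natCast, ← Real.rpow_mul hnpos.le]
    congr 1; push_cast; ring
  have hqy : (n:ℝ) ^ ((1:ℝ) / 2 + ε) = q * y ^ 2 := by rw [Real.rpow_add hnpos, hy2]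
  rw [hqy]
  have hqy1 : 1 ≤ q * y ^ 2 := by nlinarith
  have hkn : δ * n ≤ k := (le_div_iff₀ hnpos).1 hk0
  have hkn' : (k:ℝ) ≤ (1 - δ) * n := (div_le_iff₀ hnpos).1 hk1
  have hSc : (S.card : ℝ) = k := by exact_mod_cast hS
  have hScc : (Sᶜ.card : ℝ) = n - k := by
    have := Finset.card_add_card_compl S
    rw [Fintype.card_fin] at this
    have : (S.card : ℝ) + Sᶜ.card = n := by exact_mod_cast this
    linarith
  have hkpos : (0:ℝ) < k := lt_of_lt_of_le (by positivity) hkn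
  have hckn : δ * n ≤ n - k := by linarith
  have hckpos : (0:ℝ) < n - k := lt_of_lt_of_le (by positivity) hckn
  have hSne : S.Nonempty := Finset.card_pos.1 (by rw [← hSc] at hkpos; exact_mod_cast hkpos)
  have hScne : (Sᶜ).Nonempty :=
    Finset.card_pos.1 (by rw [← hScc] at hckpos; exact_mod_cast hckpos)
  have b1 : ∀ x ∈ S, ((S.erase x).card : ℝ) = k - 1 := by
    intro x hx
    have := Finset.card_erase_add_one hx
    have : ((S.erase x).card : ℝ) + 1 = S.card := by exact_mod_cast this
    linarith
  have b2 : ∀ x ∈ Sᶜ, ((S.erase x).card : ℝ) = k := by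
    intro x hx
    rw [Finset.erase_eq_of_notMem (Finset.mem_compl.1 hx), hSc]
  have b3 : ∀ x ∈ Sᶜ, ((Sᶜ.erase x).card : ℝ) = n - k - 1 := by
    intro x hx
    have := Finset.card_erase_add_one hx
    have : ((Sᶜ.erase x).card : ℝ) + 1 = Sᶜ.card := by exact_mod_cast this
    linarith
  have t1 := cov_tail h0 h1 hn1 hy1 (by linarith) hq2 S S S hSne b1 b1
  have t2 := cov_tail h0 h1 hn1 hy1 (by linarith) hq2 Sᶜ S S hScne b2 b2
  have t3 := cov_tail h0 h1 hn1 hy1 (by linarith) hq2 Sᶜ S Sᶜ hScne b2 b3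
  have m1 : ∑ x ∈ S, (((S ∩ S).erase x).card : ℝ) = k * (k - 1) := by
    rw [Finset.inter_self, Finset.sum_congr rfl b1, Finset.sum_const, nsmul_eq_mul, hSc]
  have m2 : ∑ x ∈ Sᶜ, (((S ∩ S).erase x).card : ℝ) = (n - k) * k := by
    rw [Finset.inter_self, Finset.sum_congr rfl b2, Finset.sum_const, nsmul_eq_mul, hScc]
  have m3 : ∑ x ∈ Sᶜ, (((S ∩ Sᶜ).erase x).card : ℝ) = 0 := by simp
  rw [m1, hSc, show p * (1 - p) * (k * (k - 1)) / (k:ℝ) = p * (1 - p) * (k - 1) by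
    field_simp] at t1
  rw [m2, hScc, show p * (1 - p) * ((n - k) * k) / ((n:ℝ) - k) = p * (1 - p) * k by
    field_simp] at t2
  rw [m3, hScc, mul_zero, zero_div] at t3
  have e1 := error_le hδ hnpos hq1 hy1 hkn
  have e2 := error_le hδ hnpos hq1 hy1 hckn
  rw [PrGnp_eq_Pw, Pw_not]
  refine sub_le_sub_left ?_ 1
  refine le_trans ?_ (hn₀ n ((le_max_left _ _).trans hn))
  refine le_trans (Pw_mono h0 h1 ?_) ((Pw_or h0 h1 _ _).trans ((add_le_add t1
    ((Pw_or h0 h1 _ _).trans (add_le_add t2 t3))).trans (le_of_eq (by ring))))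
  intro G _ hbad
  by_contra hcon
  push Not at hcon
  obtain ⟨g1, g2, g3⟩ := hcon
  apply hbad
  have hpp : 0 ≤ p * (1 - p) := mul_nonneg h0 (by linarith)
  have hpp1 : p * (1 - p) ≤ 1 := by nlinarith
  refine ⟨?_, ?_, ?_⟩
  · -- the mean is `p (1 - p) (k - 1)` because `x ∈ S` is not its own neighbour; the `+ 1` in the
    -- constant absorbs the difference
    rw [varu_eq_covu hSne]
    have := abs_le.1 (g1.trans e1)
    exact abs_le.2 ⟨by linarith [this.1], by linarith [this.2]⟩
  · rw [varu_eq_covu hScne]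
    refine (g2.trans e2).trans ?_
    linarith
  · have := g3.trans e2
    rw [sub_zero] at this
    unfold covu at this
    refine this.trans ?_
    linarith
end
end

section
/- Fix δ > 0 and ε > 0. Then there exist C > 0, η > 0 and n₀ such that for all n ≥ n₀ and all p ∈ [δ, 1−δ], with probability at least 1 − exp(−n^η) over G = G_{n,p} one has |V − p(1−p)n²| ≤ C·n^{3/2+ε}, where V = Σ_{v∈[n]} d(v)² − n·d(G)². -/
/-! Write `D_v` for the centred degrees and `S` for the centred number of edges of `G_{n,p}`.
Since the degree variance does not change when all degrees are shifted,
`V = ∑ D_v ^ 2 - 4 S ^ 2 / n` (`Vdeg_eq`), and `E ∑ D_v ^ 2 = p (1 - p) n (n - 1)`.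

Everything rests on one bounded-differences (McDiarmid type) inequality for a random subset of a
finite set, `bexp_tail`, proved by induction on the ground set from the two-point Hoeffding
inequality `two_point`.  It is used three times.

* `S` depends on at most `n ^ 2` edges with differences `1`, so `|S| < n ^ (1 + ε/2)` and
  `4 S ^ 2 / n` is negligible.
* `D_v` depends on `n - 1` edges with differences `1`, so `|D_v| < L := n ^ (1/2 + ε/2)` for all
  `v`.
* `∑ D_v ^ 2` itself has differences too large in the worst case.  The truncation
  `∑ min (D_v ^ 2) (L ^ 2)` (`tsum2`) agrees with it when all `|D_v| < L`, and has differences at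
  most `4 L` everywhere, so it deviates from its mean by at least `n ^ (3/2 + ε)` with probability
  at most `2 exp (-n ^ ε / 16)`.  Its mean differs from `E ∑ D_v ^ 2` by an exponentially small
  amount (`bexp_tsum2`). -/

open Finset MeasureTheory ProbabilityTheory

noncomputable section

/-! ### Bernoulli expectations on the subsets of a finite set -/

/-- Expectation of `f` over a random subset of `S` which contains each element of `S`
independently with probability `p`. -/
def bexp {α : Type*} (p : ℝ) (S : Finset α) (f : Finset α → ℝ) : ℝ :=
  ∑ A ∈ S.powerset, p ^ A.card * (1 - p) ^ (S.card - A.card) * f A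

section Bernoulli

variable {α : Type*} {p : ℝ}

lemma bexp_add (S : Finset α) (f g : Finset α → ℝ) :
    bexp p S (fun A => f A + g A) = bexp p S f + bexp p S g := by
  simp only [bexp, mul_add, Finset.sum_add_distrib]

lemma bexp_const_mul (S : Finset α) (c : ℝ) (f : Finset α → ℝ) :
    bexp p S (fun A => c * f A) = c * bexp p S f := by
  simp only [bexp, Finset.mul_sum]
  exact Finset.sum_congr rfl fun A _ => by ring

lemma bexp_sum {ι : Type*} (S : Finset α) (T : Finset ι) (f : ι → Finset α → ℝ) :
    bexp p S (fun A => ∑ i ∈ T, f i A) = ∑ i ∈ T, bexp p S (f i) := by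
  simp only [bexp, Finset.mul_sum]
  exact Finset.sum_comm

lemma bexp_mono (hp0 : 0 ≤ p) (hp1 : p ≤ 1) (S : Finset α) {f g : Finset α → ℝ}
    (h : ∀ A ⊆ S, f A ≤ g A) : bexp p S f ≤ bexp p S g := by
  have : 0 ≤ 1 - p := by linarith
  refine Finset.sum_le_sum fun A hA => ?_
  exact mul_le_mul_of_nonneg_left (h A (Finset.mem_powerset.1 hA)) (by positivity)

lemma bexp_congr (S : Finset α) {f g : Finset α → ℝ}
    (h : ∀ A ⊆ S, f A = g A) : bexp p S f = bexp p S g :=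
  Finset.sum_congr rfl fun A hA => by rw [h A (Finset.mem_powerset.1 hA)]

/-- Conditioning on whether the element `e` is chosen. -/
lemma bexp_insert [DecidableEq α] {S : Finset α} {e : α} (he : e ∉ S) (f : Finset α → ℝ) :
    bexp p (insert e S) f
      = p * bexp p S (fun A => f (insert e A)) + (1 - p) * bexp p S f := by
  unfold bexp
  rw [Finset.sum_powerset_insert he, add_comm, Finset.mul_sum, Finset.mul_sum]
  congr 1
  · refine Finset.sum_congr rfl fun A hA => ?_
    have hA' := Finset.mem_powerset.1 hA
    rw [Finset.card_insert_of_notMem he, Finset.card_insert_of_notMem fun h => he (hA' h),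
      Nat.add_sub_add_right]
    ring
  · refine Finset.sum_congr rfl fun A hA => ?_
    have hA' := Finset.card_le_card (Finset.mem_powerset.1 hA)
    rw [Finset.card_insert_of_notMem he, Nat.sub_add_comm hA']
    ring

lemma bexp_const (S : Finset α) (c : ℝ) : bexp p S (fun _ => c) = c := by
  classical
  induction S using Finset.induction_on with
  | empty => simp [bexp]
  | insert e S he ih => rw [bexp_insert he, ih]; ring

/-! ### Exponential concentration -/

/-- Two-point Hoeffding inequality: with `d = x - y`, both `(1 - p) * d` and `-p * d` lie between `-d` and `d`, so
convexity of `exp` bounds the centred moment generating function by `cosh d`. -/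
lemma two_point (hp0 : 0 ≤ p) (hp1 : p ≤ 1) (x y : ℝ) :
    p * Real.exp x + (1 - p) * Real.exp y
      ≤ Real.exp (p * x + (1 - p) * y + (x - y) ^ 2 / 2) := by
  set d := x - y with hd
  set m := p * x + (1 - p) * y with hm
  have conv : ∀ s : ℝ, 0 ≤ s → s ≤ 1 →
      Real.exp (s * d + (1 - s) * (-d)) ≤ s * Real.exp d + (1 - s) * Real.exp (-d) := by
    intro s hs hs1
    have := convexOn_exp.2 (Set.mem_univ d) (Set.mem_univ (-d)) hs (sub_nonneg.2 hs1)
      (by ring)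
    simpa [smul_eq_mul] using this
  have h1 := conv ((2 - p) / 2) (by linarith) (by linarith)
  have h2 := conv ((1 - p) / 2) (by linarith) (by linarith)
  have hc := Real.cosh_le_exp_half_sq d
  rw [Real.cosh_eq] at hc
  have ex : Real.exp x = Real.exp m * Real.exp ((2 - p) / 2 * d + (1 - (2 - p) / 2) * (-d)) := by
    rw [← Real.exp_add]; congr 1; rw [hm, hd]; ring
  have ey : Real.exp y = Real.exp m * Real.exp ((1 - p) / 2 * d + (1 - (1 - p) / 2) * (-d)) := by
    rw [← Real.exp_add]; congr 1; rw [hm, hd]; ring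
  rw [ex, ey, Real.exp_add m]
  have key : p * Real.exp ((2 - p) / 2 * d + (1 - (2 - p) / 2) * (-d))
      + (1 - p) * Real.exp ((1 - p) / 2 * d + (1 - (1 - p) / 2) * (-d))
      ≤ Real.exp (d ^ 2 / 2) := by
    refine le_trans ?_ hc
    have := add_le_add (mul_le_mul_of_nonneg_left h1 hp0)
      (mul_le_mul_of_nonneg_left h2 (sub_nonneg.2 hp1))
    refine this.trans (le_of_eq ?_)
    ring
  calc _ = Real.exp m * (p * Real.exp ((2 - p) / 2 * d + (1 - (2 - p) / 2) * (-d))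
      + (1 - p) * Real.exp ((1 - p) / 2 * d + (1 - (1 - p) / 2) * (-d))) := by ring
    _ ≤ _ := mul_le_mul_of_nonneg_left key (Real.exp_pos _).le

/-- Bounded-differences bound on the moment generating function. -/
lemma bexp_exp_le [DecidableEq α] (hp0 : 0 ≤ p) (hp1 : p ≤ 1) (S : Finset α) (c : α → ℝ) :
    ∀ f : Finset α → ℝ,
      (∀ e ∈ S, ∀ A ⊆ S, e ∉ A → |f (insert e A) - f A| ≤ c e) →
      bexp p S (fun A => Real.exp (f A))
        ≤ Real.exp (bexp p S f + (∑ e ∈ S, c e ^ 2) / 2) := by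
  induction S using Finset.induction_on with
  | empty => intro f _; simp [bexp]
  | insert e S he ih =>
    intro f hf
    have hq : 0 ≤ 1 - p := by linarith
    have h0 := ih f fun e' he' A hA hn =>
      hf e' (Finset.mem_insert_of_mem he') A (hA.trans (Finset.subset_insert _ _)) hn
    have h1 := ih (fun A => f (insert e A)) fun e' he' A hA hn => by
      have hne : e' ≠ e := fun h => he (h ▸ he')
      have := hf e' (Finset.mem_insert_of_mem he') (insert e A)
        (Finset.insert_subset_insert _ hA) (by simp [hne, hn])
      rwa [Finset.insert_comm] at this
    have hd : |bexp p S (fun A => f (insert e A)) - bexp p S f| ≤ c e := by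
      have hb : ∀ A ⊆ S, |f (insert e A) - f A| ≤ c e := fun A hA =>
        hf e (Finset.mem_insert_self _ _) A (hA.trans (Finset.subset_insert _ _))
          fun h => he (hA h)
      have u1 : bexp p S (fun A => f (insert e A)) ≤ bexp p S (fun A => f A + c e) :=
        bexp_mono hp0 hp1 S fun A hA => by linarith [(abs_le.1 (hb A hA)).2]
      have u2 : bexp p S f ≤ bexp p S (fun A => f (insert e A) + c e) :=
        bexp_mono hp0 hp1 S fun A hA => by linarith [(abs_le.1 (hb A hA)).1]
      rw [bexp_add, bexp_const] at u1 u2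
      exact abs_le.2 ⟨by linarith, by linarith⟩
    rw [bexp_insert he, bexp_insert he, Finset.sum_insert he]
    set m1 := bexp p S (fun A => f (insert e A))
    set m0 := bexp p S f
    set σ := ∑ x ∈ S, c x ^ 2
    have hsq : (m1 - m0) ^ 2 ≤ c e ^ 2 := sq_le_sq' (by linarith [(abs_le.1 hd).1]) (abs_le.1 hd).2
    calc _ ≤ p * Real.exp (m1 + σ / 2) + (1 - p) * Real.exp (m0 + σ / 2) :=
          add_le_add (mul_le_mul_of_nonneg_left h1 hp0) (mul_le_mul_of_nonneg_left h0 hq)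
      _ ≤ _ := two_point hp0 hp1 _ _
      _ ≤ _ := Real.exp_le_exp.2 (by ring_nf at hsq ⊢; linarith)

/-- One-sided Chernoff bound deduced from `bexp_exp_le`. -/
lemma bexp_upper_tail [DecidableEq α] (hp0 : 0 ≤ p) (hp1 : p ≤ 1) (S : Finset α) (c : α → ℝ)
    (f : Finset α → ℝ) (hf : ∀ e ∈ S, ∀ A ⊆ S, e ∉ A → |f (insert e A) - f A| ≤ c e)
    {σ t : ℝ} (hσ : 0 < σ) (hc : ∑ e ∈ S, c e ^ 2 ≤ σ) (ht : 0 ≤ t) :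
    bexp p S (fun A => if t ≤ f A - bexp p S f then 1 else 0) ≤ Real.exp (-(t ^ 2 / (2 * σ))) := by
  set m := bexp p S f with hm
  -- the optimal Chernoff parameter
  set l := t / σ with hl
  have hl0 : 0 ≤ l := by positivity
  have h1 := bexp_exp_le hp0 hp1 S (fun e => l * c e) (fun A => l * f A)
    fun e he A hA hn => by
      rw [← mul_sub, abs_mul, abs_of_nonneg hl0]
      exact mul_le_mul_of_nonneg_left (hf e he A hA hn) hl0
  rw [bexp_const_mul, ← hm] at h1
  calc _ ≤ bexp p S (fun A => Real.exp (-(l * (m + t))) * Real.exp (l * f A)) := by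
        refine bexp_mono hp0 hp1 S fun A _ => ?_
        split_ifs with h
        · rw [← Real.exp_add]
          refine Real.one_le_exp ?_
          have := mul_le_mul_of_nonneg_left h hl0
          linarith
        · positivity
    _ = Real.exp (-(l * (m + t))) * bexp p S (fun A => Real.exp (l * f A)) := bexp_const_mul _ _ _
    _ ≤ Real.exp (-(l * (m + t))) * Real.exp (l * m + (∑ e ∈ S, (l * c e) ^ 2) / 2) :=
        mul_le_mul_of_nonneg_left h1 (Real.exp_pos _).le
    _ ≤ _ := by
        rw [← Real.exp_add]
        refine Real.exp_le_exp.2 ?_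
        simp only [mul_pow, ← Finset.mul_sum]
        have h2 : l ^ 2 * ∑ e ∈ S, c e ^ 2 ≤ l ^ 2 * σ := mul_le_mul_of_nonneg_left hc (sq_nonneg _)
        have h3 : l ^ 2 * σ = t ^ 2 / σ := by rw [hl]; field_simp
        have h4 : l * t = t ^ 2 / σ := by rw [hl]; ring
        have h5 : t ^ 2 / (2 * σ) = t ^ 2 / σ / 2 := by field_simp
        linarith

/-- Two-sided bounded-differences inequality. -/
lemma bexp_tail [DecidableEq α] (hp0 : 0 ≤ p) (hp1 : p ≤ 1) (S : Finset α) (c : α → ℝ)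
    (f : Finset α → ℝ) (hf : ∀ e ∈ S, ∀ A ⊆ S, e ∉ A → |f (insert e A) - f A| ≤ c e)
    {σ t : ℝ} (hσ : 0 < σ) (hc : ∑ e ∈ S, c e ^ 2 ≤ σ) (ht : 0 ≤ t) :
    bexp p S (fun A => if t ≤ |f A - bexp p S f| then 1 else 0)
      ≤ 2 * Real.exp (-(t ^ 2 / (2 * σ))) := by
  have h1 := bexp_upper_tail hp0 hp1 S c f hf hσ hc ht
  have h2 := bexp_upper_tail hp0 hp1 S c (fun A => -1 * f A)
    (fun e he A hA hn => by
      have := hf e he A hA hn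
      rwa [← mul_sub, abs_mul, abs_neg, abs_one, one_mul]) hσ hc ht
  rw [bexp_const_mul] at h2
  rw [two_mul]
  refine le_trans ?_ (add_le_add h1 h2)
  rw [← bexp_add]
  refine bexp_mono hp0 hp1 S fun A _ => ?_
  by_cases h : t ≤ |f A - bexp p S f|
  · rcases le_abs.1 h with h' | h'
    · rw [if_pos h, if_pos h']; split_ifs <;> norm_num
    · rw [if_pos h, if_pos (show t ≤ -1 * f A - -1 * bexp p S f by linarith)]
      split_ifs <;> norm_num
  · rw [if_neg h]; split_ifs <;> norm_num

/-! ### Centred linear statistics -/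

open Classical in
/-- The centred linear statistic `∑ e ∈ S, a e * (1_{e ∈ A} - p)`. -/
def lin (p : ℝ) (S : Finset α) (a : α → ℝ) (A : Finset α) : ℝ :=
  ∑ e ∈ S, a e * ((if e ∈ A then 1 else 0) - p)

lemma lin_insert_sub [DecidableEq α] {S : Finset α} (a : α → ℝ) {e : α} (he : e ∈ S)
    {A : Finset α} (hA : e ∉ A) : lin p S a (insert e A) - lin p S a A = a e := by
  unfold lin
  rw [← Finset.sum_sub_distrib, Finset.sum_eq_single_of_mem e he]
  · simp [hA]; ring
  · intro b _ hb
    by_cases h : b ∈ A <;> simp [h, hb]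

lemma lin_of_insert [DecidableEq α] {S : Finset α} (a : α → ℝ) {e : α} (he : e ∉ S)
    {A : Finset α} (hA : A ⊆ S) : lin p (insert e S) a A = lin p S a A + -(p * a e) := by
  unfold lin
  rw [Finset.sum_insert he]
  have : e ∉ A := fun h => he (hA h)
  simp [this]; ring

lemma lin_of_insert_insert [DecidableEq α] {S : Finset α} (a : α → ℝ) {e : α} (he : e ∉ S)
    {A : Finset α} (hA : A ⊆ S) :
    lin p (insert e S) a (insert e A) = lin p S a A + (1 - p) * a e := by
  have h1 := lin_insert_sub (p := p) a (Finset.mem_insert_self e S) (A := A) fun h => he (hA h)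
  have h2 := lin_of_insert (p := p) a he hA
  linarith

lemma bexp_lin (S : Finset α) (a : α → ℝ) : bexp p S (lin p S a) = 0 := by
  classical
  induction S using Finset.induction_on with
  | empty => simp [bexp, lin]
  | insert e S he ih =>
    rw [bexp_insert he, bexp_congr S (fun A hA => lin_of_insert_insert a he hA),
      bexp_congr S (fun A hA => lin_of_insert a he hA), bexp_add, bexp_add, bexp_const,
      bexp_const, ih]
    ring

lemma bexp_lin_sq (S : Finset α) (a : α → ℝ) :
    bexp p S (fun A => lin p S a A ^ 2) = p * (1 - p) * ∑ e ∈ S, a e ^ 2 := by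
  classical
  have sq : ∀ (S : Finset α) (c : ℝ), bexp p S (fun A => (lin p S a A + c) ^ 2)
      = bexp p S (fun A => lin p S a A ^ 2) + c ^ 2 := by
    intro S c
    rw [bexp_congr S (g := fun A => lin p S a A ^ 2 + (2 * c * lin p S a A + c ^ 2))
      (fun A _ => by ring), bexp_add, bexp_add, bexp_const_mul, bexp_lin, bexp_const]
    ring
  induction S using Finset.induction_on with
  | empty => simp [bexp, lin]
  | insert e S he ih =>
    rw [bexp_insert he,
      bexp_congr S (fun A hA => by rw [lin_of_insert_insert a he hA]),
      bexp_congr (p := p) S (f := fun A => lin p (insert e S) a A ^ 2)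
        (fun A hA => by rw [lin_of_insert a he hA]), sq, sq, ih, Finset.sum_insert he]
    ring

lemma lin_tail (hp0 : 0 ≤ p) (hp1 : p ≤ 1) (S : Finset α) (a : α → ℝ) {σ t : ℝ}
    (hσ : 0 < σ) (ha : ∑ e ∈ S, a e ^ 2 ≤ σ) (ht : 0 ≤ t) :
    bexp p S (fun A => if t ≤ |lin p S a A| then 1 else 0)
      ≤ 2 * Real.exp (-(t ^ 2 / (2 * σ))) := by
  classical
  have := bexp_tail hp0 hp1 S (fun e => |a e|) (lin p S a)
    (fun e he A _ hn => by rw [lin_insert_sub a he hn]) hσ (by simpa using ha) ht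
  simpa [bexp_lin] using this

lemma abs_min_sq_sub_le {L : ℝ} (hL : 0 ≤ L) (x y : ℝ) :
    |min (x ^ 2) (L ^ 2) - min (y ^ 2) (L ^ 2)| ≤ 2 * L * |x - y| := by
  have e : ∀ z : ℝ, min (z ^ 2) (L ^ 2) = (min |z| L) ^ 2 := by
    intro z
    rcases le_total |z| L with h | h
    · rw [min_eq_left h, sq_abs, min_eq_left]
      exact sq_le_sq' (by linarith [neg_abs_le z]) ((le_abs_self z).trans h)
    · rw [min_eq_right h, min_eq_right]
      rw [← sq_abs z]; gcongr
  rw [e, e, sq_sub_sq, abs_mul]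
  have h1 : |min |x| L + min |y| L| ≤ 2 * L := by
    rw [abs_of_nonneg (by positivity)]
    linarith [min_le_right |x| L, min_le_right |y| L]
  have h2 : |min |x| L - min |y| L| ≤ |x - y| := by
    refine (abs_min_sub_min_le_max _ _ _ _).trans ?_
    simpa using abs_abs_sub_abs_le_abs_sub x y
  exact mul_le_mul h1 h2 (abs_nonneg _) (by positivity)

end Bernoulli

/-! ### Degrees as linear statistics of the edge set -/

open Classical in
/-- Incidence weight: `1` if `v` is an endpoint of `e`, and `0` otherwise. -/
def inc {n : ℕ} (v : Fin n) (e : Sym2 (Fin n)) : ℝ := if v ∈ e then 1 else 0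

lemma inc_sq {n : ℕ} (v : Fin n) (e : Sym2 (Fin n)) : inc v e ^ 2 = inc v e := by
  unfold inc; split_ifs <;> norm_num

lemma mem_completeEdges {n : ℕ} {e : Sym2 (Fin n)} : e ∈ completeEdges n ↔ ¬ e.IsDiag := by
  simp [completeEdges]

lemma sum_inc_vertices {n : ℕ} {e : Sym2 (Fin n)} (he : e ∈ completeEdges n) :
    ∑ v, inc v e = 2 := by
  classical
  rw [mem_completeEdges] at he
  have h := Sym2.card_toFinset_of_not_isDiag e he
  have : (Finset.univ.filter fun v => v ∈ e) = e.toFinset := by ext v; simp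
  simp only [inc, Finset.sum_boole]
  rw [this, h]; norm_num

lemma dS_eq_sum_inc {n : ℕ} (A : Finset (Sym2 (Fin n))) (v : Fin n) :
    (dS A Finset.univ v : ℝ) = ∑ e ∈ A, inc v e := by
  classical
  simp only [inc, Finset.sum_boole, dS]
  norm_cast
  refine Finset.card_bij (fun w _ => s(v, w)) ?_ ?_ ?_
  · intro w hw; simpa using hw
  · intro w _ w' _ h; exact Sym2.congr_right.1 h
  · intro e he
    obtain ⟨he, hv⟩ := Finset.mem_filter.1 he
    obtain ⟨w, rfl⟩ := Sym2.mem_iff_exists.1 hv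
    exact ⟨w, by simpa using he, rfl⟩

lemma sum_inc_edges {n : ℕ} (v : Fin n) : ∑ e ∈ completeEdges n, inc v e = (n : ℝ) - 1 := by
  classical
  rw [← dS_eq_sum_inc]
  have hn : 1 ≤ n := v.pos
  have : dS (completeEdges n) Finset.univ v = n - 1 := by
    have : (Finset.univ.filter fun w => s(v, w) ∈ completeEdges n) = Finset.univ.erase v := by
      ext w; simp [mem_completeEdges, eq_comm]
    unfold dS
    convert congrArg Finset.card this
    simp
  rw [this]; push_cast [hn]; ring

/-- Handshake lemma. -/
lemma sum_sum_inc {n : ℕ} {A : Finset (Sym2 (Fin n))} (hA : A ⊆ completeEdges n) :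
    ∑ v, ∑ e ∈ A, inc v e = 2 * (A.card : ℝ) := by
  rw [Finset.sum_comm, Finset.sum_congr rfl fun e he => sum_inc_vertices (hA he)]
  simp [mul_comm]

lemma card_completeEdges (n : ℕ) :
    ((completeEdges n).card : ℝ) = (n : ℝ) * ((n : ℝ) - 1) / 2 := by
  have := sum_sum_inc (Finset.Subset.refl (completeEdges n))
  simp only [sum_inc_edges, Finset.sum_const, Finset.card_univ, Fintype.card_fin,
    nsmul_eq_mul] at this
  linarith

lemma lin_eq {α : Type*} {p : ℝ} {S A : Finset α} (a : α → ℝ) (hA : A ⊆ S) :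
    lin p S a A = ∑ e ∈ A, a e - p * ∑ e ∈ S, a e := by
  classical
  simp only [lin, mul_sub, Finset.sum_sub_distrib, mul_ite, mul_one, mul_zero]
  congr 1
  · rw [← Finset.sum_filter, Finset.filter_mem_eq_inter, Finset.inter_eq_right.2 hA]
  · rw [Finset.mul_sum]; exact Finset.sum_congr rfl fun _ _ => by ring

/-- The degree of `v` minus its mean `p (n - 1)`, as a linear statistic. -/
def cdeg {n : ℕ} (p : ℝ) (v : Fin n) (A : Finset (Sym2 (Fin n))) : ℝ :=
  lin p (completeEdges n) (inc v) A

/-- The number of edges minus its mean, as a linear statistic. -/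
def cedge (n : ℕ) (p : ℝ) (A : Finset (Sym2 (Fin n))) : ℝ :=
  lin p (completeEdges n) (fun _ => 1) A

/-- The degree variance is invariant under translation of the degrees, so it may be computed
from the centred degrees. -/
lemma Vdeg_eq {n : ℕ} (hn : 1 ≤ n) (p : ℝ) {A : Finset (Sym2 (Fin n))}
    (hA : A ⊆ completeEdges n) :
    Vdeg A = ∑ v, cdeg p v A ^ 2 - 4 * cedge n p A ^ 2 / n := by
  have hn' : (n : ℝ) ≠ 0 := by positivity
  have hE : (A.card : ℝ) = cedge n p A + p * ((n : ℝ) * ((n : ℝ) - 1) / 2) := by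
    rw [cedge, lin_eq _ hA, ← card_completeEdges]; simp
  have hD : ∀ v, ∑ e ∈ A, inc v e = cdeg p v A + p * ((n : ℝ) - 1) := fun v => by
    rw [cdeg, lin_eq _ hA, sum_inc_edges]; ring
  have hS : ∑ v, cdeg p v A = 2 * cedge n p A := by
    have := sum_sum_inc hA
    simp only [hD, Finset.sum_add_distrib, Finset.sum_const, Finset.card_univ, Fintype.card_fin,
      nsmul_eq_mul, hE] at this
    linarith
  have hQ : ∑ v, (cdeg p v A + p * ((n : ℝ) - 1)) ^ 2
      = ∑ v, cdeg p v A ^ 2 + 2 * (p * ((n : ℝ) - 1)) * ∑ v, cdeg p v A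
        + n * (p * ((n : ℝ) - 1)) ^ 2 := by
    simp only [add_sq, Finset.sum_add_distrib, Finset.sum_const, Finset.card_univ,
      Fintype.card_fin, nsmul_eq_mul, Finset.mul_sum]
    congr 2
    exact Finset.sum_congr rfl fun _ _ => by ring
  unfold Vdeg
  simp only [dS_eq_sum_inc, hD]
  rw [hQ, hS, hE]
  field_simp
  ring

/-- The sum of squared centred degrees, each square truncated at `L ^ 2`. -/
def tsum2 (n : ℕ) (p L : ℝ) (A : Finset (Sym2 (Fin n))) : ℝ :=
  ∑ v : Fin n, min (cdeg p v A ^ 2) (L ^ 2)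

lemma abs_cdeg_le {n : ℕ} {p : ℝ} (hp0 : 0 ≤ p) (hp1 : p ≤ 1) (v : Fin n)
    {A : Finset (Sym2 (Fin n))} (hA : A ⊆ completeEdges n) : |cdeg p v A| ≤ n := by
  have h0 : ∀ e : Sym2 (Fin n), 0 ≤ inc v e := fun e => by unfold inc; split_ifs <;> norm_num
  have h1 : 0 ≤ ∑ e ∈ A, inc v e := Finset.sum_nonneg fun e _ => h0 e
  have h2 : ∑ e ∈ A, inc v e ≤ (n : ℝ) - 1 := by
    rw [← sum_inc_edges v]
    exact Finset.sum_le_sum_of_subset_of_nonneg hA fun e _ _ => h0 e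
  rw [cdeg, lin_eq _ hA, sum_inc_edges]
  have h3 : 0 ≤ (n : ℝ) - 1 := h1.trans h2
  exact abs_le.2 ⟨by nlinarith, by nlinarith⟩

lemma cdeg_tail {n : ℕ} {p : ℝ} (hp0 : 0 ≤ p) (hp1 : p ≤ 1) (v : Fin n) {L : ℝ} (hL : 0 ≤ L) :
    bexp p (completeEdges n) (fun A => if L ≤ |cdeg p v A| then 1 else 0)
      ≤ 2 * Real.exp (-(L ^ 2 / (2 * n))) := by
  have hn : (0 : ℝ) < n := by exact_mod_cast v.pos
  exact lin_tail hp0 hp1 _ _ hn (by simp only [inc_sq, sum_inc_edges]; linarith) hL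

lemma cedge_tail {n : ℕ} (hn : 1 ≤ n) {p : ℝ} (hp0 : 0 ≤ p) (hp1 : p ≤ 1) {t : ℝ} (ht : 0 ≤ t) :
    bexp p (completeEdges n) (fun A => if t ≤ |cedge n p A| then 1 else 0)
      ≤ 2 * Real.exp (-(t ^ 2 / (2 * (n : ℝ) ^ 2))) := by
  have hn' : (1 : ℝ) ≤ n := by exact_mod_cast hn
  refine lin_tail hp0 hp1 _ _ (by positivity) ?_ ht
  simp only [one_pow, Finset.sum_const, nsmul_eq_mul, mul_one, card_completeEdges]
  nlinarith

/-- Adding an edge moves two centred degrees by one, and `x ↦ min (x ^ 2) (L ^ 2)` is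
`2 L`-Lipschitz. -/
lemma tsum2_insert {n : ℕ} {p L : ℝ} (hL : 0 ≤ L) [DecidableEq (Sym2 (Fin n))]
    {e : Sym2 (Fin n)} (he : e ∈ completeEdges n)
    {A : Finset (Sym2 (Fin n))} (hn : e ∉ A) :
    |tsum2 n p L (insert e A) - tsum2 n p L A| ≤ 4 * L := by
  unfold tsum2
  rw [← Finset.sum_sub_distrib]
  calc _ ≤ ∑ v : Fin n, |min (cdeg p v (insert e A) ^ 2) (L ^ 2) - min (cdeg p v A ^ 2) (L ^ 2)| :=
        Finset.abs_sum_le_sum_abs _ _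
    _ ≤ ∑ v : Fin n, 2 * L * inc v e := by
        refine Finset.sum_le_sum fun v _ => (abs_min_sq_sub_le hL _ _).trans (le_of_eq ?_)
        rw [cdeg, cdeg, lin_insert_sub _ he hn, abs_of_nonneg]
        unfold inc; split_ifs <;> norm_num
    _ = 4 * L := by rw [← Finset.mul_sum, sum_inc_vertices he]; ring

lemma tsum2_tail {n : ℕ} (hn : 1 ≤ n) {p : ℝ} (hp0 : 0 ≤ p) (hp1 : p ≤ 1) {L t : ℝ} (hL : 0 < L)
    (ht : 0 ≤ t) :
    bexp p (completeEdges n)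
        (fun A => if t ≤ |tsum2 n p L A - bexp p (completeEdges n) (tsum2 n p L)| then 1 else 0)
      ≤ 2 * Real.exp (-(t ^ 2 / (2 * (8 * L ^ 2 * (n : ℝ) ^ 2)))) := by
  classical
  have hn' : (1 : ℝ) ≤ n := by exact_mod_cast hn
  refine bexp_tail hp0 hp1 _ (fun _ => 4 * L) _
    (fun e he A _ h => tsum2_insert hL.le he h) (by positivity) ?_ ht
  simp only [Finset.sum_const, nsmul_eq_mul, card_completeEdges]
  nlinarith [sq_nonneg L, mul_nonneg (sq_nonneg L) (by linarith : (0 : ℝ) ≤ n)]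

/-- Truncation changes the expectation only through the exponentially unlikely large degrees. -/
lemma bexp_tsum2 {n : ℕ} {p : ℝ} (hp0 : 0 ≤ p) (hp1 : p ≤ 1) {L : ℝ} (hL : 0 ≤ L) :
    |bexp p (completeEdges n) (tsum2 n p L) - p * (1 - p) * (n * ((n : ℝ) - 1))|
      ≤ 2 * (n : ℝ) ^ 3 * Real.exp (-(L ^ 2 / (2 * n))) := by
  set K := completeEdges n
  have h1 : bexp p K (tsum2 n p L) = ∑ v, bexp p K (fun A => min (cdeg p v A ^ 2) (L ^ 2)) :=
    bexp_sum K Finset.univ fun v A => min (cdeg p v A ^ 2) (L ^ 2)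
  have h2 : p * (1 - p) * (n * ((n : ℝ) - 1)) = ∑ v : Fin n, bexp p K (fun A => cdeg p v A ^ 2) := by
    have : ∀ v : Fin n, bexp p K (fun A => cdeg p v A ^ 2) = p * (1 - p) * ((n : ℝ) - 1) := by
      intro v
      unfold cdeg
      rw [bexp_lin_sq]
      simp only [inc_sq]
      rw [sum_inc_edges]
    simp only [this, Finset.sum_const, Finset.card_univ, Fintype.card_fin, nsmul_eq_mul]
    ring
  rw [h1, h2, ← Finset.sum_sub_distrib]
  refine (Finset.abs_sum_le_sum_abs _ _).trans ?_
  have h3 : ∀ v : Fin n, |bexp p K (fun A => min (cdeg p v A ^ 2) (L ^ 2))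
      - bexp p K (fun A => cdeg p v A ^ 2)|
      ≤ (n : ℝ) ^ 2 * (2 * Real.exp (-(L ^ 2 / (2 * n)))) := by
    intro v
    have u1 : bexp p K (fun A => min (cdeg p v A ^ 2) (L ^ 2)) ≤ bexp p K (fun A => cdeg p v A ^ 2) :=
      bexp_mono hp0 hp1 K fun A _ => min_le_left _ _
    have u2 : bexp p K (fun A => cdeg p v A ^ 2)
        ≤ bexp p K (fun A => min (cdeg p v A ^ 2) (L ^ 2)
          + (n : ℝ) ^ 2 * (if L ≤ |cdeg p v A| then 1 else 0)) := by
      refine bexp_mono hp0 hp1 K fun A hA => ?_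
      have hb : cdeg p v A ^ 2 ≤ (n : ℝ) ^ 2 := by
        rw [← sq_abs]; have := abs_cdeg_le hp0 hp1 v hA; gcongr
      split_ifs with h
      · have : 0 ≤ min (cdeg p v A ^ 2) (L ^ 2) := by positivity
        linarith
      · have : cdeg p v A ^ 2 ≤ L ^ 2 := by
          rw [← sq_abs]; push Not at h; gcongr
        rw [min_eq_left this]; linarith
    rw [bexp_add, bexp_const_mul] at u2
    have u3 := mul_le_mul_of_nonneg_left (cdeg_tail hp0 hp1 v hL) (sq_nonneg (n : ℝ))
    exact abs_le.2 ⟨by linarith, by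
      have : 0 ≤ (n : ℝ) ^ 2 * (2 * Real.exp (-(L ^ 2 / (2 * n)))) := by positivity
      linarith⟩
  refine (Finset.sum_le_sum fun v _ => h3 v).trans (le_of_eq ?_)
  simp only [Finset.sum_const, Finset.card_univ, Fintype.card_fin, nsmul_eq_mul]
  ring

/-! ### Combining the estimates -/

/-- Off the three exceptional events, `V` is close to `p (1 - p) n ^ 2`, where `n` bounds the difference
`p (1 - p) n` between `p (1 - p) n ^ 2` and the mean of `∑ D_v ^ 2`. -/
lemma Vdeg_close {n : ℕ} (hn : 1 ≤ n) {p : ℝ} (hp0 : 0 ≤ p) (hp1 : p ≤ 1) {L t s : ℝ}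
    (hL : 0 ≤ L) {A : Finset (Sym2 (Fin n))} (hA : A ⊆ completeEdges n)
    (h1 : |tsum2 n p L A - bexp p (completeEdges n) (tsum2 n p L)| < t)
    (h2 : ∀ v, |cdeg p v A| < L) (h3 : |cedge n p A| < s) :
    |Vdeg A - p * (1 - p) * (n : ℝ) ^ 2|
      ≤ t + 2 * (n : ℝ) ^ 3 * Real.exp (-(L ^ 2 / (2 * n))) + n + 4 * s ^ 2 / n := by
  have hn' : (1 : ℝ) ≤ n := by exact_mod_cast hn
  have hT : tsum2 n p L A = ∑ v, cdeg p v A ^ 2 := by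
    refine Finset.sum_congr rfl fun v _ => min_eq_left ?_
    rw [← sq_abs]; have := (h2 v).le; gcongr
  have hb := bexp_tsum2 (n := n) hp0 hp1 hL
  have hc0 : 0 ≤ 4 * cedge n p A ^ 2 / n := by positivity
  have hc : 4 * cedge n p A ^ 2 / n ≤ 4 * s ^ 2 / n := by
    rw [← sq_abs]; gcongr
  have hq : 0 ≤ p * (1 - p) ∧ p * (1 - p) ≤ 1 := ⟨by nlinarith, by nlinarith⟩
  have hq1 : 0 ≤ p * (1 - p) * n := mul_nonneg hq.1 (by linarith)
  have hq2 : p * (1 - p) * n ≤ n := by nlinarith [hq.2]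
  rw [Vdeg_eq hn p hA, ← hT]
  have e : p * (1 - p) * (n : ℝ) ^ 2 = p * (1 - p) * (n * ((n : ℝ) - 1)) + p * (1 - p) * n := by ring
  rw [e]
  rw [abs_lt] at h1
  rw [abs_le] at hb ⊢
  constructor <;> linarith [h1.1, h1.2, hb.1, hb.2]

/-- Union bound over the three exceptional events. -/
lemma PrGnp_ge {n : ℕ} (hn : 1 ≤ n) {p : ℝ} (hp0 : 0 ≤ p) (hp1 : p ≤ 1) {L t s B : ℝ}
    (hL : 0 < L) (ht : 0 ≤ t) (hs : 0 ≤ s)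
    (hB : t + 2 * (n : ℝ) ^ 3 * Real.exp (-(L ^ 2 / (2 * n))) + n + 4 * s ^ 2 / n ≤ B) :
    1 - (2 * Real.exp (-(t ^ 2 / (2 * (8 * L ^ 2 * (n : ℝ) ^ 2))))
      + (n * (2 * Real.exp (-(L ^ 2 / (2 * n)))) + 2 * Real.exp (-(s ^ 2 / (2 * (n : ℝ) ^ 2)))))
      ≤ PrGnp n p (fun G => |Vdeg G - p * (1 - p) * (n : ℝ) ^ 2| ≤ B) := by
  classical
  set K := completeEdges n
  set m := bexp p K (tsum2 n p L)
  set P : Finset (Sym2 (Fin n)) → Prop := fun G => |Vdeg G - p * (1 - p) * (n : ℝ) ^ 2| ≤ B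
  have hP : PrGnp n p P = bexp p K (fun A => if P A then 1 else 0) := by
    unfold PrGnp bexp
    refine Finset.sum_congr rfl fun A _ => ?_
    by_cases h : P A <;> simp [h, K]
  have key : bexp p K (fun _ => 1) ≤ bexp p K (fun A => (if P A then 1 else 0)
      + ((if t ≤ |tsum2 n p L A - m| then 1 else 0)
      + ((∑ v : Fin n, if L ≤ |cdeg p v A| then 1 else 0)
      + (if s ≤ |cedge n p A| then 1 else 0)))) := by
    refine bexp_mono hp0 hp1 K fun A hA => ?_
    have n1 : (0 : ℝ) ≤ if P A then 1 else 0 := by split_ifs <;> norm_num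
    have n2 : (0 : ℝ) ≤ if t ≤ |tsum2 n p L A - m| then 1 else 0 := by split_ifs <;> norm_num
    have n3 : ∀ v ∈ Finset.univ, (0 : ℝ) ≤ if L ≤ |cdeg p v A| then 1 else 0 := fun v _ => by
      split_ifs <;> norm_num
    have n3' := Finset.sum_nonneg n3
    have n4 : (0 : ℝ) ≤ if s ≤ |cedge n p A| then 1 else 0 := by split_ifs <;> norm_num
    by_cases h1 : t ≤ |tsum2 n p L A - m|
    · rw [if_pos h1]; linarith
    by_cases h3 : s ≤ |cedge n p A|
    · rw [if_pos h3]; linarith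
    by_cases h2 : ∃ v, L ≤ |cdeg p v A|
    · obtain ⟨v, hv⟩ := h2
      have := Finset.single_le_sum n3 (Finset.mem_univ v)
      rw [if_pos hv] at this
      linarith
    push Not at h1 h2 h3
    have hPA : P A := (Vdeg_close hn hp0 hp1 hL.le hA h1 h2 h3).trans hB
    rw [if_pos hPA]; linarith
  rw [bexp_const, bexp_add, bexp_add, bexp_add, bexp_sum, ← hP] at key
  have b1 := tsum2_tail hn hp0 hp1 hL ht
  have b2 : ∑ v : Fin n, bexp p K (fun A => if L ≤ |cdeg p v A| then 1 else 0)
      ≤ n * (2 * Real.exp (-(L ^ 2 / (2 * n)))) := by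
    refine (Finset.sum_le_sum fun v _ => cdeg_tail hp0 hp1 v hL.le).trans (le_of_eq ?_)
    simp
  have b3 := cedge_tail hn hp0 hp1 hs
  linarith

/-- `exp (-n ^ ε / 16)` beats any fixed power of `n`, which absorbs the union bound and the
truncation error. -/
lemma eventually_bounds {ε : ℝ} (hε : 0 < ε) : ∃ n₀ : ℕ, ∀ n ≥ n₀, 1 ≤ n ∧
    2 * (n : ℝ) ^ 3 * Real.exp (-((n : ℝ) ^ ε / 2)) ≤ 1 ∧
    (4 + 2 * (n : ℝ)) * Real.exp (-((n : ℝ) ^ ε / 16)) ≤ Real.exp (-(n : ℝ) ^ (ε / 2)) := by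
  have hlog := (isLittleO_log_rpow_atTop hε).bound (show (0 : ℝ) < 1 / 64 by norm_num)
  have hbig := (tendsto_rpow_atTop (half_pos hε)).eventually_ge_atTop 32
  have hall := ((hlog.and hbig).and (Filter.eventually_ge_atTop (4 : ℝ)))
  obtain ⟨n₀, h₀⟩ := Filter.eventually_atTop.1
    (tendsto_natCast_atTop_atTop.eventually hall)
  refine ⟨n₀, fun n hn => ?_⟩
  obtain ⟨⟨h1, h2⟩, h3⟩ := h₀ n hn
  have hn0 : (0 : ℝ) < n := by linarith
  have h1' : Real.log n ≤ 1 / 64 * (n : ℝ) ^ ε := by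
    rw [Real.norm_of_nonneg (Real.log_nonneg (by linarith)),
      Real.norm_of_nonneg (by positivity)] at h1
    exact h1
  have hy : (n : ℝ) ^ ε = ((n : ℝ) ^ (ε / 2)) ^ 2 := by
    rw [← Real.rpow_natCast, ← Real.rpow_mul hn0.le]; congr 1; push_cast; ring
  have hpow : ∀ k : ℕ, (n : ℝ) ^ k = Real.exp (k * Real.log n) := fun k => by
    rw [Real.exp_nat_mul, Real.exp_log hn0]
  refine ⟨by exact_mod_cast hn0, ?_, ?_⟩
  · calc _ ≤ (n : ℝ) ^ 4 * Real.exp (-((n : ℝ) ^ ε / 2)) := by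
          refine mul_le_mul_of_nonneg_right ?_ (Real.exp_pos _).le
          nlinarith [pow_pos hn0 3]
      _ ≤ 1 := by
          rw [hpow, ← Real.exp_add]
          refine Real.exp_le_one_iff.2 ?_
          push_cast
          have : 0 ≤ (n : ℝ) ^ ε := by positivity
          linarith
  · calc _ ≤ (n : ℝ) ^ 2 * Real.exp (-((n : ℝ) ^ ε / 16)) := by
          refine mul_le_mul_of_nonneg_right ?_ (Real.exp_pos _).le
          nlinarith
      _ ≤ _ := by
          rw [hpow, ← Real.exp_add]
          refine Real.exp_le_exp.2 ?_
          push_cast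
          rw [hy] at h1' ⊢
          nlinarith

/-- Remark 2.6: concentration of `V`.
Fix `δ, ε > 0`. There are `C > 0`, `η > 0`, `n₀` such that for all `n ≥ n₀` and
`p ∈ [δ, 1-δ]`, with probability at least `1 - exp(-n^η)` over `G_{n,p}`,
`|V - p(1-p)n²| ≤ C·n^(3/2+ε)`, where `V = Σ_v d(v)² - n·d(G)²`. -/
theorem stmt_8 (δ ε : ℝ) (hδ : 0 < δ) (hε : 0 < ε) :
    ∃ C > (0:ℝ), ∃ η > (0:ℝ), ∃ n₀ : ℕ, ∀ n ≥ n₀, ∀ p : ℝ, δ ≤ p → p ≤ 1 - δ →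
      PrGnp n p (fun G => |Vdeg G - p * (1 - p) * (n:ℝ) ^ 2| ≤ C * (n:ℝ) ^ ((3:ℝ)/2 + ε))
        ≥ 1 - Real.exp (-(n:ℝ) ^ η) := by
  obtain ⟨n₀, h₀⟩ := eventually_bounds hε
  refine ⟨7, by norm_num, ε / 2, by positivity, n₀, fun n hn p hp hp' => ?_⟩
  obtain ⟨hn1, hb1, hb2⟩ := h₀ n hn
  have hn' : (1 : ℝ) ≤ n := by exact_mod_cast hn1
  have hn0 : (0 : ℝ) < n := by linarith
  set x : ℝ := (n : ℝ) with hx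
  -- truncation at `L = n^(1/2 + ε/2)`, deviation `t = n^(3/2 + ε)` of the truncated sum,
  -- deviation `s = n^(1 + ε/2)` of the number of edges
  have hL2 : (x ^ (1 / 2 + ε / 2)) ^ 2 = x * x ^ ε := by
    rw [← Real.rpow_natCast, ← Real.rpow_mul hn0.le, ← Real.rpow_one_add' hn0.le (by positivity)]
    congr 1; push_cast; ring
  have hs2 : (x ^ (1 + ε / 2)) ^ 2 = x ^ 2 * x ^ ε := by
    rw [← Real.rpow_natCast, ← Real.rpow_mul hn0.le, ← Real.rpow_natCast x 2,
      ← Real.rpow_add hn0]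
    congr 1; push_cast; ring
  have ht2 : (x ^ ((3:ℝ) / 2 + ε)) ^ 2 = x ^ 3 * (x ^ ε) ^ 2 := by
    rw [← Real.rpow_natCast, ← Real.rpow_mul hn0.le, ← Real.rpow_natCast x 3,
      ← Real.rpow_natCast (x ^ ε), ← Real.rpow_mul hn0.le, ← Real.rpow_add hn0]
    congr 1; push_cast; ring
  have hy : 0 < x ^ ε := by positivity
  have eL : (x ^ (1 / 2 + ε / 2)) ^ 2 / (2 * x) = x ^ ε / 2 := by rw [hL2]; field_simp
  have es : (x ^ (1 + ε / 2)) ^ 2 / (2 * x ^ 2) = x ^ ε / 2 := by rw [hs2]; field_simp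
  have et : (x ^ ((3:ℝ) / 2 + ε)) ^ 2 / (2 * (8 * (x ^ (1 / 2 + ε / 2)) ^ 2 * x ^ 2))
      = x ^ ε / 16 := by rw [hL2, ht2]; field_simp; norm_num
  have key := PrGnp_ge (n := n) hn1 (p := p) (by linarith) (by linarith)
    (L := x ^ (1 / 2 + ε / 2)) (t := x ^ ((3:ℝ) / 2 + ε)) (s := x ^ (1 + ε / 2))
    (B := 7 * x ^ ((3:ℝ) / 2 + ε)) (by positivity) (by positivity) (by positivity) (by
      rw [← hx, eL, hs2]
      have i1 : (1 : ℝ) ≤ x ^ ((3:ℝ) / 2 + ε) := Real.one_le_rpow hn' (by positivity)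
      have i2 : x ≤ x ^ ((3:ℝ) / 2 + ε) := by
        conv_lhs => rw [← Real.rpow_one x]
        exact Real.rpow_le_rpow_of_exponent_le hn' (by linarith)
      have i3 : 4 * (x ^ 2 * x ^ ε) / x ≤ 4 * x ^ ((3:ℝ) / 2 + ε) := by
        have : 4 * (x ^ 2 * x ^ ε) / x = 4 * x ^ (1 + ε) := by
          rw [Real.rpow_add hn0, Real.rpow_one]; field_simp
        rw [this]
        have := Real.rpow_le_rpow_of_exponent_le hn' (show 1 + ε ≤ (3:ℝ) / 2 + ε by linarith)
        linarith
      linarith)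
  rw [← hx, eL, es, et] at key
  have hmono : Real.exp (-(x ^ ε / 2)) ≤ Real.exp (-(x ^ ε / 16)) :=
    Real.exp_le_exp.2 (by linarith)
  have hm2 := mul_le_mul_of_nonneg_left hmono hn0.le
  refine ge_iff_le.2 (le_trans ?_ key)
  linarith
end
end
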